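/- arXiv:2511.10347 — 2 statements merged into one kernel-verified Lean document; each statement's English description precedes it below -/
import Mathlib

section
/- Law of large numbers for the Type-I elephant random walk: for every memory parameter p ∈ (0,1), the walk satisfies S_n/n → ū almost surely as n → ∞. -/
/-!
Fix a direction `j` and let `A n` be the empirical frequency of `j` among the first `n` steps,
minus `1/m` (`freqDev`).  With `X = 1{ξ (n+1) = j} - 1/m` one has
`A (n+1) = A n + (X - A n) / (n+1)`, and the transition rule says that the conditional expectation
of `X` given the past is `a * A n`, with `a = p - (1-p)/(m-1) < 1`.  Squaring and integrating gives
`E[A (n+1)²] + 2(1-a)/(n+1) * E[A n²] ≤ E[A n²] + 4/(n+1)²`,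
so by telescoping `∑ E[A n²]/(n+1) < ∞`, hence almost surely `∑ (A n)²/(n+1) < ∞`
(`ae_summable_freqDev`).

The rest is pathwise (`tendsto_zero_of_summable_sq_div`): since `|A (n+1) - A n| ≤ 2/(n+1)`, the
increments of `(A n)³` are bounded by a multiple of `(A n)²/(n+1) + 1/(n+1)²`, so `(A n)³`
converges; a nonzero limit would contradict the divergence of the harmonic series.  Thus each
frequency tends to `1/m`, and `S n / n` is the corresponding linear combination of the `u j`.
-/


open MeasureTheory ProbabilityTheory Filter Finset Topology

noncomputable section

/-- The σ-algebra generated by the steps `ξ 1, …, ξ n` of the walk. -/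
def stepFiltration {Ω : Type*} [MeasurableSpace Ω] {m : ℕ} (ξ : ℕ → Ω → Fin m) (n : ℕ) :
    MeasurableSpace Ω :=
  ⨆ k ∈ Finset.Icc 1 n, MeasurableSpace.comap (ξ k) ⊤

/-- A Type-I elephant random walk with memory parameter `p`, `m` step directions
and deterministic first step `i0`: `ξ n` is the index of the `n`-th step (for `n ≥ 1`). -/
structure IsTypeIERW {Ω : Type*} [MeasurableSpace Ω] (μ : Measure Ω)
    (m : ℕ) (p : ℝ) (i0 : Fin m) (ξ : ℕ → Ω → Fin m) : Prop where
  measurable : ∀ n, Measurable (ξ n)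
  first_step : ∀ᵐ ω ∂μ, ξ 1 ω = i0
  cond : ∀ n : ℕ, 1 ≤ n → ∀ j : Fin m,
    (μ[(fun ω => if ξ (n + 1) ω = j then (1 : ℝ) else 0) | stepFiltration ξ n]) =ᵐ[μ]
      (fun ω => (1 / (n : ℝ)) * ∑ k ∈ Finset.Icc 1 n,
        (p * (if ξ k ω = j then (1 : ℝ) else 0)
          + ((1 - p) / ((m : ℝ) - 1)) * (if ξ k ω = j then (0 : ℝ) else 1)))

/-- Deviation from `1/m` of the frequency of the index `j` among the first `n` steps.  At `n = 0`
the value is the junk value `0`. -/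
def freqDev {Ω : Type*} {m : ℕ} (ξ : ℕ → Ω → Fin m) (j : Fin m) (n : ℕ) (ω : Ω) : ℝ :=
  (n : ℝ)⁻¹ * ∑ k ∈ Finset.Icc 1 n, ((if ξ k ω = j then (1 : ℝ) else 0) - (m : ℝ)⁻¹)

/-! ### A deterministic convergence criterion -/

lemma summable_one_div_succ_sq : Summable (fun n : ℕ => 1 / ((n : ℝ) + 1) ^ 2) := by
  have h := (summable_nat_add_iff (f := fun n : ℕ => 1 / (n : ℝ) ^ 2) 1).2
    (Real.summable_one_div_nat_pow.2 one_lt_two)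
  simpa using h

lemma not_summable_one_div_succ : ¬ Summable (fun n : ℕ => 1 / ((n : ℝ) + 1)) := by
  intro h
  refine Real.not_summable_one_div_natCast
    ((summable_nat_add_iff (f := fun n : ℕ => 1 / (n : ℝ)) 1).1 ?_)
  simpa using h

/-- A slowly varying bounded sequence whose squares are summable against `1/(n+1)` tends to `0`;
the cube is used because its increments are absolutely summable. -/
lemma tendsto_zero_of_summable_sq_div (A : ℕ → ℝ) (hA : ∀ n, |A n| ≤ 1)
    (hd : ∀ n : ℕ, |A (n + 1) - A n| ≤ 2 / ((n : ℝ) + 1))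
    (hs : Summable (fun n : ℕ => A n ^ 2 / ((n : ℝ) + 1))) :
    Tendsto A atTop (𝓝 0) := by
  have hinc : Summable (fun n : ℕ => dist (A n ^ 3) (A (n + 1) ^ 3)) := by
    refine Summable.of_nonneg_of_le (fun _ => dist_nonneg) (fun n => ?_)
      ((hs.mul_left 6).add (summable_one_div_succ_sq.mul_left 20))
    have hn : (0 : ℝ) < (n : ℝ) + 1 := by positivity
    have hn1 : 1 / ((n : ℝ) + 1) ≤ 1 := by
      rw [div_le_one hn]; linarith [(Nat.cast_nonneg n : (0 : ℝ) ≤ n)]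
    have hn0 : 0 ≤ 1 / ((n : ℝ) + 1) := by positivity
    have hd' : |A (n + 1) - A n| ≤ 2 * (1 / ((n : ℝ) + 1)) := by
      rw [mul_one_div]; exact hd n
    have e1 : A n ^ 2 / ((n : ℝ) + 1) = A n ^ 2 * (1 / ((n : ℝ) + 1)) := by ring
    have e2 : 1 / ((n : ℝ) + 1) ^ 2 = (1 / ((n : ℝ) + 1)) ^ 2 := by rw [div_pow, one_pow]
    rw [e1, e2, dist_comm, Real.dist_eq]
    set t := 1 / ((n : ℝ) + 1)
    set δ := A (n + 1) - A n with hδ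
    have hexp : A (n + 1) ^ 3 - A n ^ 3 = A n ^ 2 * (3 * δ) + (3 * A n + δ) * δ ^ 2 := by
      rw [hδ]; ring
    have hδ2 : δ ^ 2 ≤ 4 * t ^ 2 := by
      rw [← sq_abs]; nlinarith [abs_nonneg δ]
    have hb : |3 * A n + δ| ≤ 5 := by
      calc |3 * A n + δ| ≤ |3 * A n| + |δ| := abs_add_le _ _
        _ ≤ 5 := by rw [abs_mul, abs_of_pos (by norm_num : (0 : ℝ) < 3)]; linarith [hA n]
    rw [hexp]
    calc |A n ^ 2 * (3 * δ) + (3 * A n + δ) * δ ^ 2|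
        ≤ |A n ^ 2 * (3 * δ)| + |(3 * A n + δ) * δ ^ 2| := abs_add_le _ _
      _ = A n ^ 2 * (3 * |δ|) + |3 * A n + δ| * δ ^ 2 := by
          rw [abs_mul, abs_mul, abs_mul, abs_of_nonneg (sq_nonneg (A n)),
            abs_of_nonneg (sq_nonneg δ), abs_of_pos (by norm_num : (0 : ℝ) < 3)]
      _ ≤ A n ^ 2 * (3 * (2 * t)) + 5 * (4 * t ^ 2) := by gcongr
      _ = 6 * (A n ^ 2 * t) + 20 * t ^ 2 := by ring
  obtain ⟨L, hL⟩ := cauchySeq_tendsto_of_complete (cauchySeq_of_summable_dist hinc)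
  have hL0 : L = 0 := by
    by_contra hne
    have hpos : 0 < |L| := abs_pos.2 hne
    have hev : ∀ᶠ n in atTop, |L| / 2 < |A n ^ 3| :=
      hL.abs.eventually (lt_mem_nhds (by linarith))
    refine not_summable_one_div_succ ?_
    refine Summable.of_norm_bounded_eventually_nat (hs.mul_left (2 / |L|)) ?_
    filter_upwards [hev] with n hn
    have hn' : (0 : ℝ) < (n : ℝ) + 1 := by positivity
    have h3 : |A n ^ 3| ≤ A n ^ 2 := by
      rw [abs_pow, ← sq_abs (A n)]
      exact pow_le_pow_of_le_one (abs_nonneg _) (hA n) (by norm_num)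
    have h1 : 1 ≤ 2 / |L| * A n ^ 2 := by
      rw [div_mul_eq_mul_div, le_div_iff₀ hpos]; linarith
    rw [Real.norm_of_nonneg (by positivity), ← mul_div_assoc]
    gcongr
  subst hL0
  rw [tendsto_zero_iff_abs_tendsto_zero]
  have h3 : Tendsto (fun n => |A n| ^ 3) atTop (𝓝 0) := by
    simpa [abs_pow] using hL.abs
  rw [Metric.tendsto_atTop] at h3 ⊢
  intro ε hε
  obtain ⟨N, hN⟩ := h3 (ε ^ 3) (by positivity)
  refine ⟨N, fun n hn => ?_⟩
  have := hN n hn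
  simp only [Real.dist_eq, sub_zero, Function.comp, abs_abs, abs_pow] at this ⊢
  exact lt_of_pow_lt_pow_left₀ 3 hε.le this

/-! ### Pathwise recursion for the frequencies -/

section

variable {Ω : Type*} {m : ℕ} (ξ : ℕ → Ω → Fin m) (j : Fin m)

lemma abs_indicator_sub_le (k : ℕ) (ω : Ω) :
    |(if ξ k ω = j then (1 : ℝ) else 0) - (m : ℝ)⁻¹| ≤ 1 := by
  have h0 : (0 : ℝ) ≤ (m : ℝ)⁻¹ := by positivity
  have h1 : (m : ℝ)⁻¹ ≤ 1 := Nat.cast_inv_le_one m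
  rw [abs_le]
  split_ifs <;> constructor <;> linarith

lemma abs_freqDev_le (n : ℕ) (ω : Ω) : |freqDev ξ j n ω| ≤ 1 := by
  unfold freqDev
  rw [abs_mul, abs_of_nonneg (by positivity : (0 : ℝ) ≤ (n : ℝ)⁻¹)]
  have hsum : |∑ k ∈ Finset.Icc 1 n, ((if ξ k ω = j then (1 : ℝ) else 0) - (m : ℝ)⁻¹)| ≤ n := by
    refine (Finset.abs_sum_le_sum_abs _ _).trans ?_
    refine (Finset.sum_le_sum fun k _ => abs_indicator_sub_le ξ j k ω).trans ?_
    simp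
  calc (n : ℝ)⁻¹ * _ ≤ (n : ℝ)⁻¹ * n := by gcongr
    _ ≤ 1 := inv_mul_le_one

lemma freqDev_succ (n : ℕ) (ω : Ω) :
    freqDev ξ j (n + 1) ω = freqDev ξ j n ω +
      ((if ξ (n + 1) ω = j then (1 : ℝ) else 0) - (m : ℝ)⁻¹ - freqDev ξ j n ω) / ((n : ℝ) + 1) := by
  unfold freqDev
  rw [Finset.sum_Icc_succ_top (by omega)]
  rcases Nat.eq_zero_or_pos n with rfl | hn
  · simp
  · have : (n : ℝ) ≠ 0 := by positivity
    have : (n : ℝ) + 1 ≠ 0 := by positivity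
    push_cast
    field_simp
    ring

lemma abs_freqDev_succ_sub_le (n : ℕ) (ω : Ω) :
    |freqDev ξ j (n + 1) ω - freqDev ξ j n ω| ≤ 2 / ((n : ℝ) + 1) := by
  rw [freqDev_succ, add_sub_cancel_left, abs_div,
    abs_of_pos (by positivity : (0 : ℝ) < (n : ℝ) + 1)]
  gcongr
  have h1 := abs_indicator_sub_le ξ j (n + 1) ω
  have h2 := abs_freqDev_le ξ j n ω
  exact (abs_sub _ _).trans (by linarith)

end

/-! ### Second moments and almost sure summability -/

section

variable {Ω : Type*} [mΩ : MeasurableSpace Ω] {μ : Measure Ω} [IsProbabilityMeasure μ]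
  {m : ℕ} {p : ℝ} {i0 : Fin m} {ξ : ℕ → Ω → Fin m}

lemma stepFiltration_le (hξ : ∀ n, Measurable (ξ n)) (n : ℕ) : stepFiltration ξ n ≤ mΩ :=
  iSup₂_le fun k _ => (hξ k).comap_le

lemma measurable_freqDev (j : Fin m) (n : ℕ) :
    Measurable[stepFiltration ξ n] (freqDev ξ j n) := by
  unfold freqDev
  refine Measurable.const_mul (Finset.measurable_sum _ fun k hk => ?_) _
  refine Measurable.sub_const ?_ _
  have hk' : Measurable[stepFiltration ξ n] (ξ k) :=
    (comap_measurable (ξ k)).mono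
      (le_iSup₂_of_le (f := fun k (_ : k ∈ Finset.Icc 1 n) => MeasurableSpace.comap (ξ k) ⊤)
        k hk le_rfl) le_rfl
  exact (measurable_of_finite (fun i : Fin m => if i = j then (1 : ℝ) else 0)).comp hk'

lemma integrable_freqDev_sq (h : IsTypeIERW μ m p i0 ξ) (j : Fin m) (n : ℕ) :
    Integrable (fun ω => freqDev ξ j n ω ^ 2) μ := by
  have hmeas := (measurable_freqDev (ξ := ξ) j n).mono (stepFiltration_le h.measurable n) le_rfl
  refine Integrable.of_bound (hmeas.pow_const 2).aestronglyMeasurable 1 (ae_of_all _ fun ω => ?_)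
  rw [norm_pow]
  exact pow_le_one₀ (norm_nonneg _) (abs_freqDev_le ξ j n ω)

/-- The transition rule in integrated form: since `freqDev ξ j n` depends only on the first `n`
steps, the centred next step may be replaced by its conditional expectation, which is `a` times
`freqDev ξ j n` with `a = p - (1-p)/(m-1)`. -/
lemma integral_freqDev_mul_step (hm : 2 ≤ m) (h : IsTypeIERW μ m p i0 ξ) (j : Fin m) (n : ℕ) :
    ∫ ω, freqDev ξ j n ω * ((if ξ (n + 1) ω = j then (1 : ℝ) else 0) - (m : ℝ)⁻¹) ∂μ
      = (p - (1 - p) / ((m : ℝ) - 1)) * ∫ ω, freqDev ξ j n ω ^ 2 ∂μ := by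
  rcases Nat.eq_zero_or_pos n with rfl | hn
  · simp [freqDev]
  have hle := stepFiltration_le h.measurable n
  have hmeas := measurable_freqDev (ξ := ξ) j n
  have hI : Measurable (fun ω => if ξ (n + 1) ω = j then (1 : ℝ) else 0) :=
    (measurable_of_finite (fun i : Fin m => if i = j then (1 : ℝ) else 0)).comp
      (h.measurable (n + 1))
  have hA : Integrable (freqDev ξ j n) μ :=
    Integrable.of_bound (hmeas.mono hle le_rfl).aestronglyMeasurable 1
      (ae_of_all _ fun ω => abs_freqDev_le ξ j n ω)
  have hIi : Integrable (fun ω => if ξ (n + 1) ω = j then (1 : ℝ) else 0) μ := by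
    refine Integrable.of_bound hI.aestronglyMeasurable 1 (ae_of_all _ fun ω => ?_)
    split_ifs <;> simp
  have hAI : Integrable (freqDev ξ j n * fun ω => if ξ (n + 1) ω = j then (1 : ℝ) else 0) μ := by
    refine hIi.bdd_mul (c := 1) (hmeas.mono hle le_rfl).aestronglyMeasurable
      (ae_of_all _ fun ω => abs_freqDev_le ξ j n ω)
  have hAA := integrable_freqDev_sq h j n
  set a : ℝ := p - (1 - p) / ((m : ℝ) - 1) with ha
  have hm1 : (m : ℝ) - 1 ≠ 0 := by
    have : (2 : ℝ) ≤ m := by exact_mod_cast hm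
    linarith
  have hm0 : (m : ℝ) ≠ 0 := by positivity
  have hn0 : (n : ℝ) ≠ 0 := by positivity
  have hrhs : ∀ ω, (1 / (n : ℝ)) * ∑ k ∈ Finset.Icc 1 n,
        (p * (if ξ k ω = j then (1 : ℝ) else 0)
          + ((1 - p) / ((m : ℝ) - 1)) * (if ξ k ω = j then (0 : ℝ) else 1))
      = a * freqDev ξ j n ω + (m : ℝ)⁻¹ := by
    intro ω
    have hterm : ∀ k ∈ Finset.Icc 1 n, (p * (if ξ k ω = j then (1 : ℝ) else 0)
          + ((1 - p) / ((m : ℝ) - 1)) * (if ξ k ω = j then (0 : ℝ) else 1))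
        = a * ((if ξ k ω = j then (1 : ℝ) else 0) - (m : ℝ)⁻¹) + (m : ℝ)⁻¹ := by
      intro k _
      rw [ha]
      split_ifs <;> field_simp <;> ring
    rw [Finset.sum_congr rfl hterm, Finset.sum_add_distrib, ← Finset.mul_sum, Finset.sum_const,
      Nat.card_Icc, nsmul_eq_mul, freqDev]
    rw [Nat.add_sub_cancel, one_div, mul_add, inv_mul_cancel_left₀ hn0, mul_left_comm]
  have hpull : ∫ ω, freqDev ξ j n ω * (if ξ (n + 1) ω = j then (1 : ℝ) else 0) ∂μ
      = ∫ ω, freqDev ξ j n ω * (a * freqDev ξ j n ω + (m : ℝ)⁻¹) ∂μ := by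
    have h1 := condExp_mul_of_stronglyMeasurable_left (μ := μ) hmeas.stronglyMeasurable hAI hIi
    rw [show ∫ ω, freqDev ξ j n ω * (if ξ (n + 1) ω = j then (1 : ℝ) else 0) ∂μ = _ from
      (integral_condExp hle (μ := μ)
        (f := freqDev ξ j n * fun ω => if ξ (n + 1) ω = j then (1 : ℝ) else 0)).symm]
    refine integral_congr_ae ?_
    filter_upwards [h1, h.cond n hn j] with ω hω1 hω2
    rw [hω1, Pi.mul_apply, hω2, hrhs]
  have e1 : ∫ ω, freqDev ξ j n ω * ((if ξ (n + 1) ω = j then (1 : ℝ) else 0) - (m : ℝ)⁻¹) ∂μ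
      = ∫ ω, freqDev ξ j n ω * (if ξ (n + 1) ω = j then (1 : ℝ) else 0) ∂μ
        - ∫ ω, freqDev ξ j n ω * (m : ℝ)⁻¹ ∂μ := by
    simp only [mul_sub]
    exact integral_sub hAI (hA.mul_const _)
  have e2 : ∫ ω, freqDev ξ j n ω * (a * freqDev ξ j n ω + (m : ℝ)⁻¹) ∂μ
      = a * ∫ ω, freqDev ξ j n ω ^ 2 ∂μ + ∫ ω, freqDev ξ j n ω * (m : ℝ)⁻¹ ∂μ := by
    rw [← integral_const_mul, ← integral_add (hAA.const_mul a) (hA.mul_const _)]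
    refine integral_congr_ae (ae_of_all _ fun ω => ?_)
    simp only
    ring
  rw [e1, hpull, e2, add_sub_cancel_right]

/-- Second moment recursion, with `a = p - (1-p)/(m-1)`: the drift of the squared deviation
towards `0` has strength `2(1-a)/(n+1)`, and the fluctuation costs at most `4/(n+1)²`. -/
lemma secondMoment_succ_le (hm : 2 ≤ m) (h : IsTypeIERW μ m p i0 ξ) (j : Fin m) (n : ℕ) :
    ∫ ω, freqDev ξ j (n + 1) ω ^ 2 ∂μ
      + 2 * (1 - (p - (1 - p) / ((m : ℝ) - 1))) *
        ((∫ ω, freqDev ξ j n ω ^ 2 ∂μ) / ((n : ℝ) + 1))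
      ≤ ∫ ω, freqDev ξ j n ω ^ 2 ∂μ + 4 * (1 / ((n : ℝ) + 1) ^ 2) := by
  have hn : (0 : ℝ) < (n : ℝ) + 1 := by positivity
  have hle := stepFiltration_le h.measurable n
  have hmeas := (measurable_freqDev (ξ := ξ) j n).mono hle le_rfl
  have hsq := integrable_freqDev_sq h j n
  have hI : Measurable (fun ω => (if ξ (n + 1) ω = j then (1 : ℝ) else 0) - (m : ℝ)⁻¹) :=
    (measurable_of_finite (fun i : Fin m => (if i = j then (1 : ℝ) else 0) - (m : ℝ)⁻¹)).comp
      (h.measurable (n + 1))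
  have hprod : Integrable (fun ω => freqDev ξ j n ω *
      ((if ξ (n + 1) ω = j then (1 : ℝ) else 0) - (m : ℝ)⁻¹)) μ := by
    refine Integrable.of_bound (hmeas.mul hI).aestronglyMeasurable 1 (ae_of_all _ fun ω => ?_)
    rw [norm_mul]
    exact mul_le_one₀ (abs_freqDev_le ξ j n ω) (norm_nonneg _)
      (abs_indicator_sub_le ξ j (n + 1) ω)
  have hdrift : Integrable (fun ω => 2 / ((n : ℝ) + 1) * (freqDev ξ j n ω *
      ((if ξ (n + 1) ω = j then (1 : ℝ) else 0) - (m : ℝ)⁻¹) - freqDev ξ j n ω ^ 2)) μ :=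
    (hprod.sub hsq).const_mul _
  have hmain : Integrable (fun ω => freqDev ξ j n ω ^ 2 + 2 / ((n : ℝ) + 1) * (freqDev ξ j n ω *
      ((if ξ (n + 1) ω = j then (1 : ℝ) else 0) - (m : ℝ)⁻¹) - freqDev ξ j n ω ^ 2)) μ :=
    hsq.add hdrift
  have hstep : ∫ ω, freqDev ξ j (n + 1) ω ^ 2 ∂μ ≤ ∫ ω, (freqDev ξ j n ω ^ 2
      + 2 / ((n : ℝ) + 1) * (freqDev ξ j n ω *
        ((if ξ (n + 1) ω = j then (1 : ℝ) else 0) - (m : ℝ)⁻¹) - freqDev ξ j n ω ^ 2)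
      + 4 * (1 / ((n : ℝ) + 1) ^ 2)) ∂μ := by
    refine integral_mono (integrable_freqDev_sq h j (n + 1))
      (hmain.add (integrable_const _)) fun ω => ?_
    have hd := abs_freqDev_succ_sub_le ξ j n ω
    have hd2 : (freqDev ξ j (n + 1) ω - freqDev ξ j n ω) ^ 2 ≤ 4 * (1 / ((n : ℝ) + 1) ^ 2) := by
      rw [← sq_abs]
      calc _ ≤ (2 / ((n : ℝ) + 1)) ^ 2 := by gcongr
        _ = _ := by rw [div_pow]; ring
    have hlin : 2 / ((n : ℝ) + 1) * (freqDev ξ j n ω *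
        ((if ξ (n + 1) ω = j then (1 : ℝ) else 0) - (m : ℝ)⁻¹) - freqDev ξ j n ω ^ 2)
        = 2 * freqDev ξ j n ω * (freqDev ξ j (n + 1) ω - freqDev ξ j n ω) := by
      rw [freqDev_succ]; ring
    simp only [hlin]
    nlinarith [hd2]
  rw [integral_add hmain (integrable_const _), integral_add hsq hdrift, integral_const_mul,
    integral_sub hprod hsq, integral_freqDev_mul_step hm h j n] at hstep
  simp only [integral_const, probReal_univ, one_smul] at hstep
  refine le_of_sub_nonneg ((sub_nonneg.2 hstep).trans_eq ?_)
  ring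

lemma summable_secondMoment (hm : 2 ≤ m) (hp1 : p < 1) (h : IsTypeIERW μ m p i0 ξ) (j : Fin m) :
    Summable (fun n : ℕ => (∫ ω, freqDev ξ j n ω ^ 2 ∂μ) / ((n : ℝ) + 1)) := by
  set b : ℝ := 2 * (1 - (p - (1 - p) / ((m : ℝ) - 1))) with hb
  have hm1 : (0 : ℝ) < (m : ℝ) - 1 := by
    have : (2 : ℝ) ≤ m := by exact_mod_cast hm
    linarith
  have hbpos : 0 < b := by
    have : 0 < (1 - p) / ((m : ℝ) - 1) := div_pos (by linarith) hm1
    rw [hb]; linarith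
  have hv : ∀ n, 0 ≤ ∫ ω, freqDev ξ j n ω ^ 2 ∂μ :=
    fun n => integral_nonneg fun ω => sq_nonneg _
  have hpart : ∀ N : ℕ, ∫ ω, freqDev ξ j N ω ^ 2 ∂μ
      + ∑ n ∈ Finset.range N, b * ((∫ ω, freqDev ξ j n ω ^ 2 ∂μ) / ((n : ℝ) + 1))
      ≤ ∫ ω, freqDev ξ j 0 ω ^ 2 ∂μ + ∑ n ∈ Finset.range N, 4 * (1 / ((n : ℝ) + 1) ^ 2) := by
    intro N
    induction N with
    | zero => simp
    | succ N ih =>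
      rw [Finset.sum_range_succ, Finset.sum_range_succ]
      linarith [secondMoment_succ_le hm h j N]
  have hsum : Summable (fun n : ℕ => b * ((∫ ω, freqDev ξ j n ω ^ 2 ∂μ) / ((n : ℝ) + 1))) := by
    refine summable_of_sum_range_le
      (c := ∫ ω, freqDev ξ j 0 ω ^ 2 ∂μ + ∑' n : ℕ, 4 * (1 / ((n : ℝ) + 1) ^ 2))
      (fun n => mul_nonneg hbpos.le (div_nonneg (hv n) (by positivity))) fun N => ?_
    have h1 := (summable_one_div_succ_sq.mul_left 4).sum_le_tsum (Finset.range N)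
      (fun _ _ => by positivity)
    linarith [hpart N, hv N]
  exact (summable_mul_left_iff hbpos.ne').1 hsum

lemma ae_summable_freqDev (hm : 2 ≤ m) (hp1 : p < 1) (h : IsTypeIERW μ m p i0 ξ) (j : Fin m) :
    ∀ᵐ ω ∂μ, Summable (fun n : ℕ => freqDev ξ j n ω ^ 2 / ((n : ℝ) + 1)) := by
  have hInt : ∀ n : ℕ, Integrable (fun ω => freqDev ξ j n ω ^ 2 / ((n : ℝ) + 1)) μ :=
    fun n => (integrable_freqDev_sq h j n).div_const _
  have hnn : ∀ (n : ℕ) ω, 0 ≤ freqDev ξ j n ω ^ 2 / ((n : ℝ) + 1) := fun n ω => by positivity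
  have hmeas : ∀ n : ℕ,
      AEMeasurable (fun ω => ENNReal.ofReal (freqDev ξ j n ω ^ 2 / ((n : ℝ) + 1))) μ :=
    fun n => (hInt n).aemeasurable.ennreal_ofReal
  have hfin : ∫⁻ ω, ∑' n : ℕ, ENNReal.ofReal (freqDev ξ j n ω ^ 2 / ((n : ℝ) + 1)) ∂μ ≠ ⊤ := by
    rw [lintegral_tsum hmeas]
    have hs := (summable_secondMoment hm hp1 h j).tsum_ofReal_ne_top
    convert hs using 4 with n
    rw [← ofReal_integral_eq_lintegral_ofReal (hInt n) (ae_of_all _ (hnn n)), integral_div]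
  filter_upwards [ae_lt_top' (AEMeasurable.tsum hmeas) hfin] with ω hω
  refine (ENNReal.summable_toReal hω.ne).congr fun n => ?_
  rw [ENNReal.toReal_ofReal (hnn n ω)]

end

/-! ### The law of large numbers -/

/-- **Law of large numbers for the Type-I elephant random walk**: for every memory
parameter `p ∈ (0,1)`, almost surely `S n / n → ū` as `n → ∞`, where
`S n = ∑_{k=1}^n u (ξ k)` and `ū = (1/m) ∑ᵢ uᵢ`. -/
theorem typeI_ERW_law_of_large_numbers
    {Ω : Type*} [MeasurableSpace Ω] (μ : Measure Ω) [IsProbabilityMeasure μ]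
    (d m : ℕ) (hm : 2 ≤ m) (u : Fin m → Fin d → ℝ) (hu : Function.Injective u)
    (p : ℝ) (hp0 : 0 < p) (hp1 : p < 1) (i0 : Fin m) (ξ : ℕ → Ω → Fin m)
    (hERW : IsTypeIERW μ m p i0 ξ) :
    ∀ᵐ ω ∂μ, Tendsto (fun n : ℕ => (n : ℝ)⁻¹ • ∑ k ∈ Finset.Icc 1 n, u (ξ k ω))
      atTop (𝓝 ((m : ℝ)⁻¹ • ∑ i, u i)) := by
  have hae : ∀ᵐ ω ∂μ, ∀ j : Fin m, Tendsto (fun n => freqDev ξ j n ω) atTop (𝓝 0) := by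
    rw [ae_all_iff]
    intro j
    filter_upwards [ae_summable_freqDev hm hp1 hERW j] with ω hω
    exact tendsto_zero_of_summable_sq_div _ (fun n => abs_freqDev_le ξ j n ω)
      (fun n => abs_freqDev_succ_sub_le ξ j n ω) hω
  filter_upwards [hae] with ω hω
  have hlim : Tendsto (fun n : ℕ => ∑ j, (freqDev ξ j n ω + (m : ℝ)⁻¹) • u j) atTop
      (𝓝 (∑ j, (0 + (m : ℝ)⁻¹) • u j)) :=
    tendsto_finsetSum _ fun j _ => ((hω j).add_const _).smul_const _
  simp only [zero_add, ← Finset.smul_sum] at hlim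
  refine hlim.congr' ?_
  filter_upwards [eventually_ge_atTop 1] with n hn
  have hn0 : (n : ℝ) ≠ 0 := by positivity
  have hfreq : ∀ j, freqDev ξ j n ω + (m : ℝ)⁻¹
      = (n : ℝ)⁻¹ * ∑ k ∈ Finset.Icc 1 n, (if ξ k ω = j then (1 : ℝ) else 0) := by
    intro j
    rw [freqDev, Finset.sum_sub_distrib, Finset.sum_const, Nat.card_Icc, nsmul_eq_mul,
      Nat.add_sub_cancel, mul_sub, inv_mul_cancel_left₀ hn0, sub_add_cancel]
  simp only [hfreq, mul_smul, ← Finset.smul_sum, Finset.sum_smul]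
  rw [Finset.sum_comm]
  simp [ite_smul]
end
end

section
/- Central limit theorem in the diffusive regime for the Type-II ERW (one-dimensional marginal at t = 1): if 0 < p < min(p_c^m, p_c^{m'}), then (S_{2n} − n(ū + w̄))/√n converges in distribution, as n → ∞, to the centered multivariate Gaussian distribution on ℝ^d with covariance matrix C_a·Σ(U) + C_{a'}·Σ(W). -/
/-! Fix a direction `l`. With `x_i = l · (u_i - ū)`, the projection of the centered walk driven by
`ξ` is the partial sum `T_n = ∑_{k ≤ n} x(ξ_k)`, where `∑ x_i = 0`. Conditionally on the first `n`
steps, the next step is drawn from `a` times their empirical distribution plus `1 - a` times the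
uniform distribution, so its conditional mean is `a T_n / n` and its conditional variance is
close to `v = (1/m) ∑ x_i²`. Expanding the conditional characteristic function gives, for
`φ_n(t) = E exp (i t T_n)`, the recursion
`φ_{n+1}(t) = φ_n((1 + a/n) t) exp (-v t²/2) + O(t²/√n + |t|³ + t⁴)` (`walkChar_step`). The
error is controlled by the linear second-moment bound `integral_sq_le`, which holds because
`a < 1/2`; it is applied to `x` and to `x² - v`.

The Gaussian of variance `n v / (1 - 2a)` satisfies the same recursion up to a small error. On the
diffusive scale `t = s/√n` one step replaces the frequency `s` by `ρ_n s`, where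
`ρ_n = (1 + a/n) √n / √(n+1) ≤ 1 - κ/(n+1)` with `κ > 0`. Hence the difference of the two
characteristic functions, measured against the weight `|s| + s⁴`, contracts by factors whose
product vanishes, the harmonic series being divergent, while the errors are `o(1/n)`; so the
difference tends to zero (`tendsto_zero_of_contracting`, `tendsto_walkChar`). No martingale limit
theorem is needed.

By independence of `ξ` and `η` the characteristic function of the whole walk is the product of two
such factors, and Lévy's continuity theorem on Euclidean space gives convergence to the
multivariate Gaussian, which is then transported to `Fin d → ℝ`. -/

open MeasureTheory ProbabilityTheory Filter Finset Topology Matrix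

noncomputable section

/-- A Type-II elephant random walk with memory parameter `p`: two independent
reinforced sequences of step indices, `ξ` (values in `Fin m`, first step `i0`) and
`η` (values in `Fin m'`, first step `j0`). -/
structure IsTypeIIERW {Ω : Type*} [MeasurableSpace Ω] (μ : Measure Ω)
    (m m' : ℕ) (p : ℝ) (i0 : Fin m) (j0 : Fin m')
    (ξ : ℕ → Ω → Fin m) (η : ℕ → Ω → Fin m') : Prop where
  measurable_fst : ∀ n, Measurable (ξ n)
  measurable_snd : ∀ n, Measurable (η n)
  first_fst : ∀ᵐ ω ∂μ, ξ 1 ω = i0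
  first_snd : ∀ᵐ ω ∂μ, η 1 ω = j0
  cond_fst : ∀ n : ℕ, 1 ≤ n → ∀ j : Fin m,
    (μ[(fun ω => if ξ (n + 1) ω = j then (1 : ℝ) else 0) | stepFiltration ξ n]) =ᵐ[μ]
      (fun ω => (1 / (n : ℝ)) * ∑ k ∈ Finset.Icc 1 n,
        (p * (if ξ k ω = j then (1 : ℝ) else 0)
          + ((1 - p) / ((m : ℝ) - 1)) * (if ξ k ω = j then (0 : ℝ) else 1)))
  cond_snd : ∀ n : ℕ, 1 ≤ n → ∀ j : Fin m',
    (μ[(fun ω => if η (n + 1) ω = j then (1 : ℝ) else 0) | stepFiltration η n]) =ᵐ[μ]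
      (fun ω => (1 / (n : ℝ)) * ∑ k ∈ Finset.Icc 1 n,
        (p * (if η k ω = j then (1 : ℝ) else 0)
          + ((1 - p) / ((m' : ℝ) - 1)) * (if η k ω = j then (0 : ℝ) else 1)))
  indep : IndepFun (fun ω => fun k => ξ k ω) (fun ω => fun k => η k ω) μ

/-- `ν` is the centered (multivariate) Gaussian distribution on `ℝ^d` with covariance
matrix `S`: equivalently, every linear functional `x ↦ ⟨l, x⟩` pushes `ν` forward to a
real centered Gaussian with variance `⟨l, S l⟩`. -/
def IsCenteredGaussianCov {d : ℕ} (ν : Measure (Fin d → ℝ))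
    (S : Matrix (Fin d) (Fin d) ℝ) : Prop :=
  IsProbabilityMeasure ν ∧ ∀ l : Fin d → ℝ,
    ν.map (fun x => l ⬝ᵥ x) =
      ProbabilityTheory.gaussianReal 0 (Real.toNNReal (l ⬝ᵥ S.mulVec l))

/-! ### Analytic estimates -/

/-- Second-order Taylor remainder of `θ ↦ exp (iθ)`, with a bound valid for every real `θ`. -/
lemma norm_cexp_sub_two (θ : ℝ) :
    ‖Complex.exp (Complex.I * θ) - 1 - Complex.I * θ‖ ≤ 3 * θ ^ 2 := by
  by_cases h : |θ| ≤ 1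
  · have h1 := Complex.norm_exp_sub_one_sub_id_le (x := Complex.I * θ) (by simpa using h)
    have h2 : ‖Complex.I * (θ : ℂ)‖ ^ 2 = θ ^ 2 := by simp
    rw [h2] at h1
    nlinarith [sq_nonneg θ]
  · push Not at h
    have h1 : ‖Complex.exp (Complex.I * θ) - 1‖ ≤ |θ| := Real.norm_exp_I_mul_ofReal_sub_one_le
    have h2 : ‖Complex.I * (θ : ℂ)‖ = |θ| := by simp
    have h3 := norm_sub_le (Complex.exp (Complex.I * θ) - 1) (Complex.I * θ)
    rw [h2] at h3
    nlinarith [sq_abs θ]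

/-- Third-order Taylor remainder of `y ↦ exp (iy)`, with a bound valid for every real `y`. -/
lemma norm_cexp_sub_three (y : ℝ) :
    ‖Complex.exp (Complex.I * y) - 1 - Complex.I * y + (y : ℂ) ^ 2 / 2‖ ≤ 3 * |y| ^ 3 := by
  by_cases h : |y| ≤ 1
  · have h1 := Complex.norm_exp_sub_sum_le_norm_mul_exp (Complex.I * y) 3
    have h2 : ‖Complex.I * (y : ℂ)‖ = |y| := by simp
    have h4 : Complex.exp (Complex.I * y) - ∑ k ∈ range 3, (Complex.I * (y : ℂ)) ^ k / (k.factorial : ℂ)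
        = Complex.exp (Complex.I * y) - 1 - Complex.I * y + (y : ℂ) ^ 2 / 2 := by
      simp [Finset.sum_range_succ, mul_pow]; ring
    rw [h2, h4] at h1
    have h5 : Real.exp |y| ≤ 3 :=
      (Real.exp_le_exp.2 h).trans (Real.exp_one_lt_d9.le.trans (by norm_num))
    have h6 : 0 ≤ |y| ^ 3 := by positivity
    nlinarith
  · push Not at h
    have h1 : ‖Complex.exp (Complex.I * y) - 1‖ ≤ |y| := Real.norm_exp_I_mul_ofReal_sub_one_le
    have h2 : ‖Complex.I * (y : ℂ)‖ = |y| := by simp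
    have h3 := norm_sub_le (Complex.exp (Complex.I * y) - 1) (Complex.I * y)
    have h4 := norm_add_le (Complex.exp (Complex.I * y) - 1 - Complex.I * y) ((y : ℂ) ^ 2 / 2)
    have h5 : ‖(y : ℂ) ^ 2 / 2‖ = |y| ^ 2 / 2 := by simp
    rw [h2] at h3
    rw [h5] at h4
    have h6 : |y| ^ 2 ≤ |y| ^ 3 := pow_le_pow_right₀ h.le (by norm_num)
    have h7 : |y| ^ 1 ≤ |y| ^ 3 := pow_le_pow_right₀ h.le (by norm_num)
    linarith

/-- `exp (iθ) exp (-r)` agrees with its first-order expansion up to `O(θ² + r²)`. -/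
lemma norm_cexp_mul_exp_sub (θ r : ℝ) (hr : 0 ≤ r) :
    ‖Complex.exp (Complex.I * θ) * (Real.exp (-r) : ℂ) - (1 + Complex.I * θ - r)‖
      ≤ 4 * θ ^ 2 + 2 * r ^ 2 := by
  have hlow : 1 - r ≤ Real.exp (-r) := by linarith [Real.add_one_le_exp (-r)]
  have hone : Real.exp (-r) ≤ 1 := Real.exp_le_one_iff.2 (by linarith)
  have hquad : |Real.exp (-r) - 1 + r| ≤ r ^ 2 := by
    rw [abs_of_nonneg (by linarith)]
    by_cases h : r ≤ 1
    · have := Real.abs_exp_sub_one_sub_id_le (x := -r) (by rw [abs_neg, abs_of_nonneg hr]; exact h)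
      have := (abs_le.1 this).2
      nlinarith
    · nlinarith
  have hlin : |Real.exp (-r) - 1| ≤ r := by
    rw [abs_le]; constructor <;> linarith
  have e : Complex.exp (Complex.I * θ) * (Real.exp (-r) : ℂ) - (1 + Complex.I * θ - r)
      = (Complex.exp (Complex.I * θ) - 1 - Complex.I * θ) * (Real.exp (-r) : ℂ)
        + ((Real.exp (-r) - 1 + r : ℝ) : ℂ)
        + Complex.I * θ * ((Real.exp (-r) - 1 : ℝ) : ℂ) := by
    push_cast; ring
  rw [e]
  refine (norm_add₃_le).trans ?_
  rw [norm_mul, norm_mul, norm_mul, Complex.norm_real, Complex.norm_real, Complex.norm_real,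
    Complex.norm_real, Complex.norm_I, Real.norm_eq_abs, Real.norm_eq_abs, Real.norm_eq_abs,
    Real.norm_eq_abs, one_mul, abs_of_pos (Real.exp_pos _)]
  have h1 := norm_cexp_sub_two θ
  have h2 : ‖Complex.exp (Complex.I * θ) - 1 - Complex.I * θ‖ * Real.exp (-r) ≤ 3 * θ ^ 2 :=
    (mul_le_of_le_one_right (norm_nonneg _) hone).trans h1
  have h3 : |θ| * |Real.exp (-r) - 1| ≤ |θ| * r := by gcongr
  nlinarith [sq_nonneg (|θ| - r), sq_abs θ]

/-- On the nonpositive half-line `exp` is `1`-Lipschitz. -/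
lemma abs_exp_neg_sub_exp_neg_le {x y : ℝ} (hx : 0 ≤ x) (hy : 0 ≤ y) :
    |Real.exp (-x) - Real.exp (-y)| ≤ |x - y| := by
  wlog h : x ≤ y generalizing x y
  · rw [abs_sub_comm, abs_sub_comm x]; exact this hy hx (le_of_not_ge h)
  have h1 : Real.exp (-y) = Real.exp (-x) * Real.exp (-(y - x)) := by
    rw [← Real.exp_add]; ring_nf
  have h2 := Real.add_one_le_exp (-(y - x))
  have h3 : Real.exp (-x) ≤ 1 := Real.exp_le_one_iff.2 (by linarith)
  have h4 : Real.exp (-(y-x)) ≤ 1 := Real.exp_le_one_iff.2 (by linarith)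
  have h5 := Real.exp_pos (-x)
  rw [abs_of_nonneg (by rw [h1]; nlinarith), abs_sub_comm, abs_of_nonneg (by linarith), h1]
  nlinarith

/-- The products `∏ (1 - κ/(j+1))` vanish in the limit, because the harmonic series diverges. -/
lemma tendsto_prod_one_sub {κ : ℝ} (hκ0 : 0 < κ) (hκ1 : κ ≤ 1) (N : ℕ) :
    Tendsto (fun n : ℕ => ∏ j ∈ Finset.Ico N n, (1 - κ / ((j : ℝ) + 1))) atTop (𝓝 0) := by
  have hpos (j : ℕ) : 0 ≤ 1 - κ / ((j : ℝ) + 1) := by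
    have : κ / ((j : ℝ) + 1) ≤ 1 := by
      rw [div_le_one (by positivity)]
      have : (0 : ℝ) ≤ j := by positivity
      linarith
    linarith
  have hle (n : ℕ) : ∏ j ∈ Finset.Ico N n, (1 - κ / ((j : ℝ) + 1))
      ≤ Real.exp (-(κ * ∑ j ∈ Finset.Ico N n, 1 / ((j : ℝ) + 1))) := by
    rw [Finset.mul_sum, ← Finset.sum_neg_distrib, Real.exp_sum]
    refine Finset.prod_le_prod (fun j _ => hpos j) fun j _ => ?_
    have := Real.add_one_le_exp (-(κ * (1 / ((j : ℝ) + 1))))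
    calc _ = -(κ * (1 / ((j : ℝ) + 1))) + 1 := by ring
      _ ≤ _ := this
  refine squeeze_zero (fun n => Finset.prod_nonneg fun j _ => hpos j) hle ?_
  refine Real.tendsto_exp_atBot.comp (tendsto_neg_atTop_atBot.comp ?_)
  refine Tendsto.const_mul_atTop hκ0 ?_
  have h := Real.tendsto_sum_range_one_div_nat_succ_atTop
  refine (tendsto_atTop_add_const_right _ (-∑ j ∈ Finset.range N, 1 / ((j : ℝ) + 1)) h).congr' ?_
  filter_upwards [eventually_ge_atTop N] with n hn
  rw [Finset.sum_Ico_eq_sub _ hn]; ring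

/-- If the errors `F n s` satisfy a recursion that contracts the frequency `s` by
`1 - κ/(n+1)` at the price of an error `o(1/(n+1))`, both measured against the weight
`|s| + s⁴`, then they vanish in the limit. -/
lemma tendsto_zero_of_contracting (F : ℕ → ℝ → ℝ) (hF0 : ∀ n s, 0 ≤ F n s)
    (hFb : ∀ n, ∃ B, 0 ≤ B ∧ ∀ s, F n s ≤ B * (|s| + s ^ 4))
    (κ : ℝ) (hκ0 : 0 < κ) (hκ1 : κ ≤ 1) (ρ e : ℕ → ℝ)
    (hρ0 : ∀ᶠ n in atTop, 0 ≤ ρ n)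
    (hρ : ∀ᶠ n : ℕ in atTop, ρ n ≤ 1 - κ / ((n : ℝ) + 1))
    (he : Tendsto e atTop (𝓝 0))
    (hrec : ∀ᶠ n : ℕ in atTop, ∀ s,
      F (n + 1) s ≤ F n (ρ n * s) + e n / ((n : ℝ) + 1) * (|s| + s ^ 4)) (s : ℝ) :
    Tendsto (fun n => F n s) atTop (𝓝 0) := by
  -- It suffices that every `ε > 0` eventually bounds `F n s / (|s| + s⁴)` up to a null sequence.
  have key : ∀ ε > 0, ∃ G : ℕ → ℝ, Tendsto G atTop (𝓝 0) ∧
      ∀ᶠ n in atTop, F n s ≤ (ε + G n) * (|s| + s ^ 4) := by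
    intro ε hε
    have he' : ∀ᶠ n in atTop, e n ≤ κ * ε := he.eventually_le_const (by positivity)
    obtain ⟨N, hN⟩ := eventually_atTop.1 (((hρ0.and hρ).and he').and hrec)
    obtain ⟨B, hB0, hB⟩ := hFb N
    refine ⟨fun n => B * ∏ j ∈ Finset.Ico N n, (1 - κ / ((j : ℝ) + 1)), ?_, ?_⟩
    · simpa using (tendsto_prod_one_sub hκ0 hκ1 N).const_mul B
    · filter_upwards [eventually_ge_atTop N] with n hn
      revert s
      induction n, hn using Nat.le_induction with
      | base =>
        intro s
        have : 0 ≤ |s| + s ^ 4 := by positivity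
        simp only [Finset.Ico_self, Finset.prod_empty, mul_one]
        nlinarith [hB s]
      | succ n hn ih =>
        intro s
        obtain ⟨⟨⟨h0, h1⟩, h2⟩, h3⟩ := hN n hn
        set g : ℝ := |s| + s ^ 4
        have hg : 0 ≤ g := by positivity
        set P : ℝ := ∏ j ∈ Finset.Ico N n, (1 - κ / ((j : ℝ) + 1))
        have hP : 0 ≤ P := Finset.prod_nonneg fun j _ => by
          have : κ / ((j : ℝ) + 1) ≤ 1 := by
            rw [div_le_one (by positivity)]
            have : (0 : ℝ) ≤ j := by positivity
            linarith
          linarith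
        rw [Finset.prod_Ico_succ_top hn]
        have hn1 : 0 < κ / ((n : ℝ) + 1) := by positivity
        have hρ1 : ρ n ≤ 1 := by linarith
        have hgs : |ρ n * s| + (ρ n * s) ^ 4 ≤ (1 - κ / ((n : ℝ) + 1)) * g := by
          have h4 : ρ n ^ 4 ≤ ρ n := pow_le_of_le_one h0 hρ1 (by norm_num)
          have : |ρ n * s| + (ρ n * s) ^ 4 ≤ ρ n * g := by
            rw [abs_mul, abs_of_nonneg h0, mul_pow, mul_add]
            gcongr
          exact this.trans (by gcongr)
        calc F (n + 1) s ≤ F n (ρ n * s) + e n / ((n : ℝ) + 1) * g := h3 s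
          _ ≤ (ε + B * P) * ((1 - κ / ((n : ℝ) + 1)) * g) + (κ * ε) / ((n : ℝ) + 1) * g := by
            have hBP : 0 ≤ ε + B * P := by positivity
            gcongr
            exact (ih _).trans (by gcongr)
          _ = (ε + B * (P * (1 - κ / ((n : ℝ) + 1)))) * g := by ring
  rw [Metric.tendsto_atTop]
  intro δ hδ
  set g : ℝ := |s| + s ^ 4
  have hg : 0 ≤ g := by positivity
  obtain ⟨G, hG, hFG⟩ := key (δ / (2 * (g + 1))) (by positivity)
  have hlim : Tendsto (fun n => (δ / (2 * (g + 1)) + G n) * g) atTop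
      (𝓝 ((δ / (2 * (g + 1)) + 0) * g)) := (hG.const_add _).mul_const _
  have hlt : (δ / (2 * (g + 1)) + 0) * g < δ := by
    rw [add_zero, div_mul_eq_mul_div, div_lt_iff₀ (by positivity)]
    nlinarith
  obtain ⟨N, hN⟩ := eventually_atTop.1 (hFG.and (hlim.eventually_lt_const hlt))
  refine ⟨N, fun n hn => ?_⟩
  rw [Real.dist_eq, sub_zero, abs_of_nonneg (hF0 n s)]
  exact (hN n hn).1.trans_lt (hN n hn).2

lemma sq_le_weight (s : ℝ) : s ^ 2 ≤ |s| + s ^ 4 := by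
  have e4 : s ^ 4 = |s| ^ 4 := by rw [← abs_pow, abs_of_nonneg (by positivity)]
  rw [← sq_abs, e4]
  rcases le_total |s| 1 with h | h
  · linarith [pow_le_of_le_one (abs_nonneg s) h (by norm_num : 2 ≠ 0), pow_nonneg (abs_nonneg s) 4]
  · linarith [pow_le_pow_right₀ h (by norm_num : 2 ≤ 4), abs_nonneg s]

lemma abs_pow_three_le_weight (s : ℝ) : |s| ^ 3 ≤ |s| + s ^ 4 := by
  have e4 : s ^ 4 = |s| ^ 4 := by rw [← abs_pow, abs_of_nonneg (by positivity)]
  rw [e4]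
  rcases le_total |s| 1 with h | h
  · linarith [pow_le_of_le_one (abs_nonneg s) h (by norm_num : 3 ≠ 0), pow_nonneg (abs_nonneg s) 4]
  · linarith [pow_le_pow_right₀ h (by norm_num : 3 ≤ 4), abs_nonneg s]

lemma eventually_scaling_nonneg {a : ℝ} (ha : -1 ≤ a) :
    ∀ᶠ n : ℕ in atTop, 0 ≤ (1 + a / n) * (√n / √((n : ℝ) + 1)) := by
  filter_upwards [eventually_ge_atTop 1] with n hn
  have hn1 : (1 : ℝ) ≤ n := by exact_mod_cast hn
  have : -1 ≤ a / n := by rw [le_div_iff₀ (by linarith)]; linarith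
  exact mul_nonneg (by linarith) (by positivity)

/-- Stretching by `1 + a/n` and rescaling from `√n` to `√(n+1)` contracts when `a < 1/2`: the
factor is `1 - (1/2 - a + o(1))/n`. -/
lemma eventually_scaling_le {a : ℝ} (ha0 : -1 ≤ a) (ha : a < 1 / 2) :
    ∀ᶠ n : ℕ in atTop, (1 + a / n) * (√n / √((n : ℝ) + 1))
      ≤ 1 - (1 / 2 - a) / 2 / ((n : ℝ) + 1) := by
  set κ : ℝ := (1 / 2 - a) / 2 with hκ
  have hκ0 : 0 < κ := by rw [hκ]; linarith
  filter_upwards [eventually_ge_atTop 1,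
    tendsto_natCast_atTop_atTop.eventually_ge_atTop (1 / (4 * κ))] with n hn hnκ
  have hn1 : (1 : ℝ) ≤ n := by exact_mod_cast hn
  have hn0 : (0 : ℝ) < n := by linarith
  have han : -1 ≤ a / n := by rw [le_div_iff₀ hn0]; linarith
  have hk : a / (2 * n) ≤ κ := by
    rw [div_le_iff₀ (by positivity)] at hnκ ⊢
    nlinarith
  have hsq : √(n : ℝ) / √((n : ℝ) + 1) ≤ (n + 1 / 2) / (n + 1) := by
    have q1 := Real.sq_sqrt hn0.le
    have q2 := Real.sq_sqrt (by positivity : (0 : ℝ) ≤ (n : ℝ) + 1)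
    rw [div_le_div_iff₀ (by positivity) (by positivity)]
    nlinarith [sq_nonneg (√(n : ℝ) - √((n : ℝ) + 1)), Real.sqrt_nonneg (n : ℝ),
      Real.sqrt_pos.2 (by positivity : (0 : ℝ) < (n : ℝ) + 1)]
  calc _ ≤ (1 + a / n) * ((n + 1 / 2) / (n + 1)) := by
        exact mul_le_mul_of_nonneg_left hsq (by linarith)
    _ = (n + 1 / 2 + a + a / (2 * n)) / (n + 1) := by field_simp; ring
    _ ≤ (n + 1 - κ) / (n + 1) := by gcongr; linarith
    _ = _ := by field_simp

/-! ### Reinforced sequences -/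

/-- Partial sum `∑_{k=1}^n x(ξ_k)` of a real function of the steps. -/
def walkSum {Ω : Type*} {m : ℕ} (ξ : ℕ → Ω → Fin m) (x : Fin m → ℝ) (n : ℕ) (ω : Ω) : ℝ :=
  ∑ k ∈ Finset.Icc 1 n, x (ξ k ω)

lemma walkSum_congr {Ω : Type*} {m : ℕ} {ξ : ℕ → Ω → Fin m} (x : Fin m → ℝ) {n : ℕ} {ω ω' : Ω}
    (h : ∀ k ∈ Finset.Icc 1 n, ξ k ω = ξ k ω') : walkSum ξ x n ω = walkSum ξ x n ω' :=
  Finset.sum_congr rfl fun k hk => by rw [h k hk]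

lemma walkSum_succ {Ω : Type*} {m : ℕ} {ξ : ℕ → Ω → Fin m} (x : Fin m → ℝ) (n : ℕ) (ω : Ω) :
    walkSum ξ x (n + 1) ω = walkSum ξ x n ω + x (ξ (n + 1) ω) := by
  rw [walkSum, Finset.sum_Icc_succ_top (by omega), walkSum]

section Reinforced

variable {Ω : Type*} [MeasurableSpace Ω] {μ : Measure Ω} {m : ℕ}
  {ξ : ℕ → Ω → Fin m}

/-- A function determined by the first `n` steps takes finitely many values, hence it is
measurable for the σ-algebra of these steps and integrable. -/
lemma stronglyMeasurable_integrable_of_steps [IsProbabilityMeasure μ] {E : Type*} [NormedAddCommGroup E]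
    (hξ : ∀ n, Measurable (ξ n)) (n : ℕ) {f : Ω → E}
    (hf : ∀ ω ω', (∀ k ∈ Finset.Icc 1 n, ξ k ω = ξ k ω') → f ω = f ω') :
    StronglyMeasurable[stepFiltration ξ n] f ∧ Integrable f μ := by
  let path : Ω → (Finset.Icc 1 n → Fin m) := fun ω k => ξ k ω
  have hfac : Function.FactorsThrough f path := fun ω ω' h =>
    hf ω ω' fun k hk => congrFun h ⟨k, hk⟩
  obtain ⟨F, rfl⟩ := (Function.factorsThrough_iff f).1 hfac
  have hle : stepFiltration ξ n ≤ ‹MeasurableSpace Ω› :=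
    iSup₂_le fun k _ => (hξ k).comap_le
  have hpath : Measurable[stepFiltration ξ n] path := by
    refine @measurable_pi_lambda _ _ _ (stepFiltration ξ n) _ _ fun k => ?_
    have h1 : MeasurableSpace.comap (ξ k) ⊤ ≤ stepFiltration ξ n :=
      le_iSup₂_of_le k.1 k.2 le_rfl
    exact Measurable.mono (comap_measurable (ξ k)) h1 le_rfl
  have hF : StronglyMeasurable F := .of_discrete
  refine ⟨hF.comp_measurable hpath, ?_⟩
  have hpath2 : Measurable path := hpath.mono hle le_rfl
  have : IsFiniteMeasure (μ.map path) := inferInstance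
  exact (Integrable.of_finite (μ := μ.map path) (f := F)).comp_measurable hpath2

/-- `ξ` is reinforced with parameter `a`: conditionally on the first `n` steps, the next one
copies a uniformly chosen past step with weight `a`, and is uniform with weight `1 - a`
(the weight `a` may be negative). -/
structure IsReinforced (μ : Measure Ω) (a : ℝ) (ξ : ℕ → Ω → Fin m) : Prop where
  meas : ∀ n, Measurable (ξ n)
  cond : ∀ n : ℕ, 1 ≤ n → ∀ j : Fin m,
    (μ[(fun ω => if ξ (n + 1) ω = j then (1 : ℝ) else 0) | stepFiltration ξ n]) =ᵐ[μ]
      fun ω => a / n * ∑ k ∈ Finset.Icc 1 n, (if ξ k ω = j then (1 : ℝ) else 0) + (1 - a) / m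

/-- The memory rule with parameter `p` is a reinforcement with parameter `(mp-1)/(m-1)`. -/
lemma isReinforced_of_cond (hm : 2 ≤ m) {p a : ℝ} (ha : a = ((m : ℝ) * p - 1) / ((m : ℝ) - 1))
    (hξ : ∀ n, Measurable (ξ n))
    (h : ∀ n : ℕ, 1 ≤ n → ∀ j : Fin m,
      (μ[(fun ω => if ξ (n + 1) ω = j then (1 : ℝ) else 0) | stepFiltration ξ n]) =ᵐ[μ]
        (fun ω => (1 / (n : ℝ)) * ∑ k ∈ Finset.Icc 1 n,
          (p * (if ξ k ω = j then (1 : ℝ) else 0)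
            + ((1 - p) / ((m : ℝ) - 1)) * (if ξ k ω = j then (0 : ℝ) else 1)))) :
    IsReinforced μ a ξ := by
  refine ⟨hξ, fun n hn j => (h n hn j).trans (Eventually.of_forall fun ω => ?_)⟩
  have hm2 : (2 : ℝ) ≤ m := by exact_mod_cast hm
  have hm0 : (m : ℝ) ≠ 0 := by linarith
  have hm1 : (m : ℝ) - 1 ≠ 0 := by linarith
  have hn0 : (n : ℝ) ≠ 0 := by positivity
  have hterm (k : ℕ) : p * (if ξ k ω = j then (1 : ℝ) else 0)
      + ((1 - p) / ((m : ℝ) - 1)) * (if ξ k ω = j then (0 : ℝ) else 1)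
      = a * (if ξ k ω = j then (1 : ℝ) else 0) + (1 - a) / m := by
    rw [ha]; split_ifs <;> field_simp <;> ring
  simp only [hterm, Finset.sum_add_distrib, ← Finset.mul_sum, Finset.sum_const, Nat.card_Icc,
    Nat.add_sub_cancel, nsmul_eq_mul]
  field_simp

variable [IsProbabilityMeasure μ] {a : ℝ}

/-- Averaging out the next step: for functions `H j` of the first `n` steps, the expectation of
`H (ξ_{n+1})` is that of a mixture of the values at past steps and of the uniform average. -/
lemma IsReinforced.integral_step {E : Type*} [NormedAddCommGroup E] [NormedSpace ℝ E]
    [CompleteSpace E] (hξ : IsReinforced μ a ξ) {n : ℕ} (hn : 1 ≤ n) (H : Fin m → Ω → E)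
    (hH : ∀ j ω ω', (∀ k ∈ Finset.Icc 1 n, ξ k ω = ξ k ω') → H j ω = H j ω') :
    ∫ ω, H (ξ (n + 1) ω) ω ∂μ =
      ∫ ω, ((a / n) • ∑ k ∈ Finset.Icc 1 n, H (ξ k ω) ω + ((1 - a) / m) • ∑ j, H j ω) ∂μ := by
  have hle : stepFiltration ξ n ≤ ‹MeasurableSpace Ω› :=
    iSup₂_le fun k _ => (hξ.meas k).comap_le
  have hHn (j : Fin m) := stronglyMeasurable_integrable_of_steps (μ := μ) hξ.meas n (hH j)
  have hstep (f : Ω → E) (n' : ℕ)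
      (hf : ∀ ω ω', (∀ k ∈ Finset.Icc 1 n', ξ k ω = ξ k ω') → f ω = f ω') : Integrable f μ :=
    (stronglyMeasurable_integrable_of_steps (μ := μ) hξ.meas n' hf).2
  have hmono {ω ω' : Ω} (h : ∀ k ∈ Finset.Icc 1 (n + 1), ξ k ω = ξ k ω') :
      ∀ k ∈ Finset.Icc 1 n, ξ k ω = ξ k ω' :=
    fun k hk => h k (Finset.Icc_subset_Icc_right (Nat.le_succ n) hk)
  have hlast {ω ω' : Ω} (h : ∀ k ∈ Finset.Icc 1 (n + 1), ξ k ω = ξ k ω') :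
      ξ (n + 1) ω = ξ (n + 1) ω' := h _ (by simp)
  have hind (j : Fin m) : Integrable (fun ω => if ξ (n + 1) ω = j then (1 : ℝ) else 0) μ :=
    (stronglyMeasurable_integrable_of_steps (μ := μ) hξ.meas (n + 1)
      fun ω ω' h => by rw [hlast h]).2
  have hprod (j : Fin m) :
      Integrable (fun ω => (if ξ (n + 1) ω = j then (1 : ℝ) else 0) • H j ω) μ :=
    hstep _ (n + 1) fun ω ω' h => by rw [hlast h, hH j ω ω' (hmono h)]
  have hone (j : Fin m) : ∫ ω, (if ξ (n + 1) ω = j then (1 : ℝ) else 0) • H j ω ∂μ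
      = ∫ ω, (a / n * ∑ k ∈ Finset.Icc 1 n, (if ξ k ω = j then (1 : ℝ) else 0)
          + (1 - a) / m) • H j ω ∂μ := by
    rw [← integral_condExp hle]
    refine integral_congr_ae ?_
    refine (condExp_smul_of_aestronglyMeasurable_right (hind j) (hprod j)
      (hHn j).1.aestronglyMeasurable).trans ?_
    filter_upwards [hξ.cond n hn j] with ω hω
    simp only [Pi.smul_apply', hω]
  calc ∫ ω, H (ξ (n + 1) ω) ω ∂μ
      = ∫ ω, ∑ j, (if ξ (n + 1) ω = j then (1 : ℝ) else 0) • H j ω ∂μ := by simp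
    _ = ∑ j, ∫ ω, (if ξ (n + 1) ω = j then (1 : ℝ) else 0) • H j ω ∂μ :=
        integral_finsetSum _ fun j _ => hprod j
    _ = ∑ j, ∫ ω, (a / n * ∑ k ∈ Finset.Icc 1 n, (if ξ k ω = j then (1 : ℝ) else 0)
          + (1 - a) / m) • H j ω ∂μ := Finset.sum_congr rfl fun j _ => hone j
    _ = ∫ ω, ∑ j, (a / n * ∑ k ∈ Finset.Icc 1 n, (if ξ k ω = j then (1 : ℝ) else 0)
          + (1 - a) / m) • H j ω ∂μ := by
        refine (integral_finsetSum _ fun j _ => hstep _ n fun ω ω' h => ?_).symm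
        rw [hH j ω ω' h, Finset.sum_congr rfl fun k hk => by rw [h k hk]]
    _ = _ := by
        refine integral_congr_ae (Eventually.of_forall fun ω => ?_)
        simp only [add_smul, Finset.sum_add_distrib, ← Finset.smul_sum, mul_smul]
        congr 2
        simp only [Finset.sum_smul]
        rw [Finset.sum_comm]
        simp

/-- Any function of a partial sum is integrable. -/
lemma integrable_comp_walkSum {E : Type*} [NormedAddCommGroup E] (hξ : ∀ n, Measurable (ξ n))
    (x : Fin m → ℝ) (n : ℕ) (g : ℝ → E) : Integrable (fun ω => g (walkSum ξ x n ω)) μ :=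
  (stronglyMeasurable_integrable_of_steps (μ := μ) hξ n
    fun ω ω' h => by rw [walkSum_congr x h]).2

/-- In the diffusive regime `a < 1/2` the second moment of a centered partial sum grows at most
linearly. -/
lemma IsReinforced.integral_sq_le (hξ : IsReinforced μ a ξ) (ha : a < 1 / 2) (x : Fin m → ℝ)
    (hx : ∑ i, x i = 0) :
    ∃ C, 0 ≤ C ∧ ∀ n : ℕ, 1 ≤ n → ∫ ω, walkSum ξ x n ω ^ 2 ∂μ ≤ C * n := by
  set B2 : ℝ := ∑ i, x i ^ 2
  have hB (i : Fin m) : x i ^ 2 ≤ B2 :=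
    Finset.single_le_sum (f := fun i => x i ^ 2) (fun _ _ => sq_nonneg _) (Finset.mem_univ i)
  have hB0 : 0 ≤ B2 := Finset.sum_nonneg fun _ _ => sq_nonneg _
  set c := max a 0
  have hc0 : 0 ≤ c := le_max_right _ _
  have hca : a ≤ c := le_max_left _ _
  have hc : 0 < 1 - 2 * c := by
    have : c < 1 / 2 := max_lt ha (by norm_num)
    linarith
  set C := B2 / (1 - 2 * c)
  have hC0 : 0 ≤ C := by positivity
  have hCB : B2 = C * (1 - 2 * c) := by simp only [C]; field_simp
  refine ⟨C, hC0, fun n hn => ?_⟩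
  induction n, hn using Nat.le_induction with
  | base =>
    calc ∫ ω, walkSum ξ x 1 ω ^ 2 ∂μ ≤ ∫ _, B2 ∂μ :=
          integral_mono (integrable_comp_walkSum hξ.meas x 1 (· ^ 2)) (integrable_const _)
            fun ω => by simpa [walkSum] using hB _
      _ = B2 := by simp
      _ ≤ C * (1 : ℕ) := by push_cast; nlinarith
  | succ n hn ih =>
    have hn0 : (0 : ℝ) < n := by positivity
    have hcross : ∫ ω, walkSum ξ x n ω * x (ξ (n + 1) ω) ∂μ
        = a / n * ∫ ω, walkSum ξ x n ω ^ 2 ∂μ := by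
      rw [hξ.integral_step hn (fun j ω => walkSum ξ x n ω * x j)
        fun j ω ω' h => by rw [walkSum_congr x h], ← integral_const_mul]
      refine integral_congr_ae (Eventually.of_forall fun ω => ?_)
      simp only [← Finset.mul_sum, hx, smul_eq_mul, mul_zero, add_zero]
      rw [← walkSum, sq]
    have hi1 := integrable_comp_walkSum (μ := μ) hξ.meas x n (· ^ 2)
    have hi2 : Integrable (fun ω => walkSum ξ x n ω * x (ξ (n + 1) ω)) μ :=
      (stronglyMeasurable_integrable_of_steps (μ := μ) hξ.meas (n + 1) fun ω ω' h => by
        rw [walkSum_congr x fun k hk => h k (Finset.Icc_subset_Icc_right (Nat.le_succ n) hk),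
          h (n + 1) (by simp)]).2
    have hi3 : Integrable
        (fun ω => walkSum ξ x n ω ^ 2 + 2 * (walkSum ξ x n ω * x (ξ (n + 1) ω))) μ :=
      hi1.add (hi2.const_mul 2)
    have hS0 : 0 ≤ ∫ ω, walkSum ξ x n ω ^ 2 ∂μ := integral_nonneg fun ω => sq_nonneg _
    calc ∫ ω, walkSum ξ x (n + 1) ω ^ 2 ∂μ
        ≤ ∫ ω, (walkSum ξ x n ω ^ 2 + 2 * (walkSum ξ x n ω * x (ξ (n + 1) ω)) + B2) ∂μ := by
          refine integral_mono (integrable_comp_walkSum hξ.meas x (n + 1) (· ^ 2))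
            (hi3.add (integrable_const _)) fun ω => ?_
          simp only [walkSum_succ]
          nlinarith [hB (ξ (n + 1) ω)]
      _ = (∫ ω, walkSum ξ x n ω ^ 2 ∂μ)
          + 2 * (a / n * ∫ ω, walkSum ξ x n ω ^ 2 ∂μ) + B2 := by
          rw [integral_add hi3 (integrable_const _),
            integral_add hi1 (hi2.const_mul 2), integral_const_mul, hcross]
          simp
      _ ≤ C * n + 2 * (c / n * (C * n)) + B2 := by gcongr
      _ = C * ((n + 1 : ℕ) : ℝ) := by
          rw [hCB]; push_cast; field_simp; ring


/-! ### The characteristic function of one reinforced walk -/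

/-- One step of the recursion, before taking expectations: the conditional characteristic
function of the next step is `exp (iθ) exp (-r)` with `θ = t a T/n` and `r = v t²/2`, up to the
fluctuation `∑ (x(z_k)² - v)` of the empirical variance and terms of higher order. -/
lemma norm_step_charFun_sub_le {m n : ℕ} (hm : 0 < m) (hn : 1 ≤ n) {a : ℝ} (ha1 : |a| ≤ 1)
    (x : Fin m → ℝ) (hx : ∑ i, x i = 0) (B : ℝ) (hB : ∀ i, |x i| ≤ B)
    (v : ℝ) (hv : v = (m : ℝ)⁻¹ * ∑ i, x i ^ 2) (z : ℕ → Fin m) (t : ℝ) :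
    ‖(a / n) • ∑ k ∈ Finset.Icc 1 n, Complex.exp (Complex.I * (t * x (z k) : ℝ))
        + ((1 - a) / m) • ∑ j, Complex.exp (Complex.I * (t * x j : ℝ))
        - Complex.exp (Complex.I * (t * (a / n) * ∑ k ∈ Finset.Icc 1 n, x (z k) : ℝ))
          * (Real.exp (-(v * t ^ 2 / 2)) : ℂ)‖
      ≤ 9 * B ^ 3 * |t| ^ 3 + t ^ 2 * |∑ k ∈ Finset.Icc 1 n, (x (z k) ^ 2 - v)| / n
        + 4 * t ^ 2 * (∑ k ∈ Finset.Icc 1 n, x (z k)) ^ 2 / n ^ 2 + v ^ 2 * t ^ 4 := by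
  have hn0 : (0 : ℝ) < n := by positivity
  have hm0 : (0 : ℝ) < m := by positivity
  have hv0 : 0 ≤ v := by rw [hv]; positivity
  set T := ∑ k ∈ Finset.Icc 1 n, x (z k) with hT
  set W := ∑ k ∈ Finset.Icc 1 n, (x (z k) ^ 2 - v) with hW
  set R : ℝ → ℂ := fun y => Complex.exp (Complex.I * y) - 1 - Complex.I * y + (y : ℂ) ^ 2 / 2
    with hR
  have hRb (i : Fin m) : ‖R (t * x i)‖ ≤ 3 * (B ^ 3 * |t| ^ 3) := by
    refine (norm_cexp_sub_three _).trans ?_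
    rw [abs_mul, mul_pow, mul_comm (B ^ 3)]
    have := hB i
    gcongr
  have hE (y : ℝ) : Complex.exp (Complex.I * y)
      = R y + ((1 - y ^ 2 / 2 : ℝ) : ℂ) + Complex.I * y := by
    simp only [hR]; push_cast; ring
  have hsq : ∑ i, x i ^ 2 = m * v := by rw [hv]; field_simp
  have hsqW : ∑ k ∈ Finset.Icc 1 n, x (z k) ^ 2 = W + n * v := by
    rw [hW, Finset.sum_sub_distrib]; simp
  have hsum1 : ∑ k ∈ Finset.Icc 1 n, Complex.exp (Complex.I * (t * x (z k) : ℝ))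
      = ∑ k ∈ Finset.Icc 1 n, R (t * x (z k))
        + ((n - t ^ 2 / 2 * (W + n * v) : ℝ) : ℂ) + Complex.I * ((t * T : ℝ) : ℂ) := by
    simp only [hE, Finset.sum_add_distrib]
    rw [← hsqW, ← Finset.mul_sum, ← Complex.ofReal_sum, ← Complex.ofReal_sum, hT, Finset.mul_sum,
      Finset.mul_sum, Finset.sum_sub_distrib]
    simp [mul_pow, mul_div_right_comm]
  have hsum2 : ∑ j, Complex.exp (Complex.I * (t * x j : ℝ))
      = ∑ j, R (t * x j) + ((m - t ^ 2 / 2 * (m * v) : ℝ) : ℂ) := by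
    simp only [hE, Finset.sum_add_distrib]
    rw [← hsq, ← Finset.mul_sum, ← Complex.ofReal_sum, ← Complex.ofReal_sum, Finset.mul_sum,
      ← Finset.mul_sum (f := x), hx, Finset.sum_sub_distrib]
    simp [mul_pow, mul_div_right_comm]
  set θ : ℝ := t * (a / n) * T with hθ
  set r : ℝ := v * t ^ 2 / 2 with hr
  have hmain : (a / n) • ∑ k ∈ Finset.Icc 1 n, Complex.exp (Complex.I * (t * x (z k) : ℝ))
        + ((1 - a) / m) • ∑ j, Complex.exp (Complex.I * (t * x j : ℝ))
        - Complex.exp (Complex.I * θ) * (Real.exp (-r) : ℂ)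
      = (a / n) • ∑ k ∈ Finset.Icc 1 n, R (t * x (z k)) + ((1 - a) / m) • ∑ j, R (t * x j)
        + ((-(a / n * (t ^ 2 / 2) * W) : ℝ) : ℂ)
        - (Complex.exp (Complex.I * θ) * (Real.exp (-r) : ℂ) - (1 + Complex.I * θ - r)) := by
    have hn0' : (n : ℂ) ≠ 0 := by exact_mod_cast hn0.ne'
    have hm0' : (m : ℂ) ≠ 0 := by exact_mod_cast hm0.ne'
    rw [hsum1, hsum2, hθ, hr]
    simp only [Complex.real_smul]
    push_cast
    field_simp
    ring
  rw [hmain]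
  have ha2 : |1 - a| ≤ 2 := by
    rw [abs_le] at *; constructor <;> linarith
  have b1 : ‖(a / n) • ∑ k ∈ Finset.Icc 1 n, R (t * x (z k))‖ ≤ 3 * (B ^ 3 * |t| ^ 3) := by
    have h1 : ‖∑ k ∈ Finset.Icc 1 n, R (t * x (z k))‖ ≤ n * (3 * (B ^ 3 * |t| ^ 3)) := by
      refine (norm_sum_le_of_le _ fun k _ => hRb (z k)).trans ?_
      simp
    have hpos : 0 ≤ 3 * (B ^ 3 * |t| ^ 3) := (norm_nonneg _).trans (hRb (z 0))
    rw [norm_smul, Real.norm_eq_abs, abs_div, Nat.abs_cast]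
    calc _ ≤ 1 / (n : ℝ) * (n * (3 * (B ^ 3 * |t| ^ 3))) := by gcongr
      _ = _ := by field_simp
  have b2 : ‖((1 - a) / m) • ∑ j, R (t * x j)‖ ≤ 2 * (3 * (B ^ 3 * |t| ^ 3)) := by
    have h1 : ‖∑ j, R (t * x j)‖ ≤ m * (3 * (B ^ 3 * |t| ^ 3)) := by
      refine (norm_sum_le_of_le _ fun j _ => hRb j).trans ?_
      simp
    have hpos : 0 ≤ 3 * (B ^ 3 * |t| ^ 3) := (norm_nonneg _).trans (hRb (z 0))
    rw [norm_smul, Real.norm_eq_abs, abs_div, Nat.abs_cast]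
    calc _ ≤ 2 / (m : ℝ) * (m * (3 * (B ^ 3 * |t| ^ 3))) := by gcongr
      _ = _ := by field_simp
  have b3 : ‖((-(a / n * (t ^ 2 / 2) * W) : ℝ) : ℂ)‖ ≤ t ^ 2 * |W| / n := by
    rw [Complex.norm_real, Real.norm_eq_abs, abs_neg, abs_mul, abs_mul, abs_div, Nat.abs_cast,
      abs_of_nonneg (by positivity : 0 ≤ t ^ 2 / 2)]
    calc |a| / n * (t ^ 2 / 2) * |W| ≤ 1 / n * t ^ 2 * |W| := by
          gcongr
          linarith [sq_nonneg t]
      _ = _ := by ring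
  have b4 := norm_cexp_mul_exp_sub θ r (by positivity)
  have b5 : 4 * θ ^ 2 ≤ 4 * t ^ 2 * T ^ 2 / n ^ 2 := by
    have : a ^ 2 ≤ 1 := by rw [← sq_abs]; exact pow_le_one₀ (abs_nonneg _) ha1
    calc 4 * θ ^ 2 = a ^ 2 * (4 * t ^ 2 * T ^ 2 / n ^ 2) := by rw [hθ]; ring
      _ ≤ 1 * (4 * t ^ 2 * T ^ 2 / n ^ 2) := by gcongr
      _ = _ := one_mul _
  have b6 : 2 * r ^ 2 ≤ v ^ 2 * t ^ 4 := by
    have : 0 ≤ v ^ 2 * t ^ 4 := by positivity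
    rw [hr]; nlinarith
  refine (norm_sub_le _ _).trans ?_
  have b7 := norm_add₃_le (a := (a / n) • ∑ k ∈ Finset.Icc 1 n, R (t * x (z k)))
    (b := ((1 - a) / m) • ∑ j, R (t * x j)) (c := ((-(a / n * (t ^ 2 / 2) * W) : ℝ) : ℂ))
  linarith

/-- Characteristic function of the partial sum `∑_{k=1}^n x(ξ_k)`. -/
def walkChar (μ : Measure Ω) (ξ : ℕ → Ω → Fin m) (x : Fin m → ℝ) (n : ℕ) (t : ℝ) : ℂ :=
  ∫ ω, Complex.exp (Complex.I * (t * walkSum ξ x n ω : ℝ)) ∂μ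

/-- Up to an error negligible on the diffusive scale `t = s/√n`, a step of the walk stretches the
frequency by `1 + a/n` and multiplies by the Gaussian factor `exp (-v t²/2)`. -/
lemma IsReinforced.walkChar_step (hξ : IsReinforced μ a ξ) (hm : 0 < m) (ha : a < 1 / 2)
    (ha1 : |a| ≤ 1) (x : Fin m → ℝ) (hx : ∑ i, x i = 0)
    (v : ℝ) (hv : v = (m : ℝ)⁻¹ * ∑ i, x i ^ 2) :
    ∃ K, 0 ≤ K ∧ ∀ n : ℕ, 1 ≤ n → ∀ t : ℝ,
      ‖walkChar μ ξ x (n + 1) t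
          - walkChar μ ξ x n ((1 + a / n) * t) * (Real.exp (-(v * t ^ 2 / 2)) : ℂ)‖
        ≤ K * (t ^ 2 / √n + |t| ^ 3 + t ^ 4) := by
  have hm0 : (0 : ℝ) < m := by positivity
  obtain ⟨C, hC0, hC⟩ := hξ.integral_sq_le ha x hx
  obtain ⟨D, hD0, hD⟩ := hξ.integral_sq_le ha (fun i => x i ^ 2 - v) (by
    rw [Finset.sum_sub_distrib, hv]; simp; field_simp; simp)
  set B : ℝ := ∑ i, |x i|
  have hB (i : Fin m) : |x i| ≤ B :=
    Finset.single_le_sum (f := fun i => |x i|) (fun _ _ => abs_nonneg _) (Finset.mem_univ i)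
  have hB0 : 0 ≤ B := Finset.sum_nonneg fun _ _ => abs_nonneg _
  refine ⟨9 * B ^ 3 + (D + 1) + 4 * C + v ^ 2, by positivity, fun n hn t => ?_⟩
  have hn1 : (1 : ℝ) ≤ n := by exact_mod_cast hn
  have hn0 : (0 : ℝ) < n := by linarith
  have hs0 : 0 < √(n : ℝ) := Real.sqrt_pos.2 hn0
  have hss : √(n : ℝ) * √(n : ℝ) = n := Real.mul_self_sqrt hn0.le
  have hs1 : 1 ≤ √(n : ℝ) := Real.one_le_sqrt.2 hn1
  set W : Ω → ℝ := walkSum ξ (fun i => x i ^ 2 - v) n with hW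
  set T : Ω → ℝ := walkSum ξ x n with hT
  let e : Ω → ℂ := fun ω => Complex.exp (Complex.I * (t * T ω : ℝ))
  let Q : Ω → ℂ := fun ω =>
    (a / n) • ∑ k ∈ Finset.Icc 1 n, Complex.exp (Complex.I * (t * x (ξ k ω) : ℝ))
        + ((1 - a) / m) • ∑ j, Complex.exp (Complex.I * (t * x j : ℝ))
  let G : Ω → ℂ := fun ω => Complex.exp (Complex.I * (t * (a / n) * T ω : ℝ))
          * (Real.exp (-(v * t ^ 2 / 2)) : ℂ)
  have h1 : walkChar μ ξ x (n + 1) t = ∫ ω, e ω * Q ω ∂μ := by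
    have hH := hξ.integral_step hn
      (fun j ω => e ω * Complex.exp (Complex.I * (t * x j : ℝ)))
      fun j ω ω' h => by simp only [e, hT, walkSum_congr x h]
    have h2 : walkChar μ ξ x (n + 1) t
        = ∫ ω, e ω * Complex.exp (Complex.I * (t * x (ξ (n + 1) ω) : ℝ)) ∂μ := by
      refine integral_congr_ae (Eventually.of_forall fun ω => ?_)
      simp only [e, ← Complex.exp_add, walkSum_succ, hT]
      congr 1; push_cast; ring
    rw [h2, hH]
    refine integral_congr_ae (Eventually.of_forall fun ω => ?_)
    simp only [Q, mul_add, ← Finset.mul_sum, mul_smul_comm]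
  have h2 : walkChar μ ξ x n ((1 + a / n) * t) * (Real.exp (-(v * t ^ 2 / 2)) : ℂ)
      = ∫ ω, e ω * G ω ∂μ := by
    rw [walkChar, ← integral_mul_const]
    refine integral_congr_ae (Eventually.of_forall fun ω => ?_)
    simp only [e, G, ← mul_assoc, ← Complex.exp_add]
    congr 2; push_cast; ring
  have hstep {f : Ω → ℂ} (hf : ∀ ω ω', (∀ k ∈ Finset.Icc 1 n, ξ k ω = ξ k ω') → f ω = f ω') :
      Integrable f μ := (stronglyMeasurable_integrable_of_steps (μ := μ) hξ.meas n hf).2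
  have hiQ : Integrable (fun ω => e ω * Q ω) μ := hstep fun ω ω' h => by
    simp only [e, Q, hT, walkSum_congr x h]
    rw [Finset.sum_congr rfl fun k hk => by rw [h k hk]]
  have hiG : Integrable (fun ω => e ω * G ω) μ := hstep fun ω ω' h => by
    simp only [e, G, hT, walkSum_congr x h]
  rw [h1, h2, ← integral_sub hiQ hiG]
  -- The fluctuation `|W|` is split by `2|W| ≤ W²/√n + √n`.
  have hpt (ω : Ω) : ‖e ω * Q ω - e ω * G ω‖ ≤ (9 * B ^ 3 * |t| ^ 3 + v ^ 2 * t ^ 4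
      + t ^ 2 / √n) + (t ^ 2 / (√n * n) * W ω ^ 2 + 4 * t ^ 2 / n ^ 2 * T ω ^ 2) := by
    have he : ‖e ω‖ = 1 := by
      simp only [e]; rw [mul_comm]; exact Complex.norm_exp_ofReal_mul_I _
    rw [← mul_sub, norm_mul, he, one_mul]
    have hQ := norm_step_charFun_sub_le hm hn ha1 x hx B hB v hv (fun k => ξ k ω) t
    refine hQ.trans ?_
    change 9 * B ^ 3 * |t| ^ 3 + t ^ 2 * |W ω| / n + 4 * t ^ 2 * T ω ^ 2 / n ^ 2 + _ ≤ _
    have hamgm : |W ω| / n ≤ 1 / √n + 1 / (√n * n) * W ω ^ 2 := by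
      rw [← sq_abs (W ω)]
      have : |W ω| * √n ≤ n + |W ω| ^ 2 := by nlinarith [sq_nonneg (|W ω| - √n), abs_nonneg (W ω)]
      calc |W ω| / n = |W ω| * √n / (√n * n) := by field_simp
        _ ≤ (n + |W ω| ^ 2) / (√n * n) := by gcongr
        _ = _ := by field_simp
    have := mul_le_mul_of_nonneg_left hamgm (sq_nonneg t)
    have e1 : t ^ 2 * (1 / √n + 1 / (√n * n) * W ω ^ 2)
      = t ^ 2 / √n + t ^ 2 / (√n * n) * W ω ^ 2 := by ring
    have e2 : t ^ 2 * (|W ω| / n) = t ^ 2 * |W ω| / n := by ring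
    have e3 : 4 * t ^ 2 * T ω ^ 2 / n ^ 2 = 4 * t ^ 2 / n ^ 2 * T ω ^ 2 := by ring
    linarith
  have hiW : Integrable (fun ω => t ^ 2 / (√n * n) * W ω ^ 2) μ :=
    (integrable_comp_walkSum hξ.meas _ n (· ^ 2)).const_mul _
  have hiT : Integrable (fun ω => 4 * t ^ 2 / n ^ 2 * T ω ^ 2) μ :=
    (integrable_comp_walkSum hξ.meas _ n (· ^ 2)).const_mul _
  have hiWT : Integrable (fun ω => t ^ 2 / (√n * n) * W ω ^ 2 + 4 * t ^ 2 / n ^ 2 * T ω ^ 2) μ :=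
    hiW.add hiT
  calc ‖∫ ω, (e ω * Q ω - e ω * G ω) ∂μ‖
      ≤ ∫ ω, ((9 * B ^ 3 * |t| ^ 3 + v ^ 2 * t ^ 4 + t ^ 2 / √n)
          + (t ^ 2 / (√n * n) * W ω ^ 2 + 4 * t ^ 2 / n ^ 2 * T ω ^ 2)) ∂μ :=
        norm_integral_le_of_norm_le ((integrable_const _).add hiWT) (Eventually.of_forall hpt)
    _ = (9 * B ^ 3 * |t| ^ 3 + v ^ 2 * t ^ 4 + t ^ 2 / √n)
          + (t ^ 2 / (√n * n) * (∫ ω, W ω ^ 2 ∂μ) + 4 * t ^ 2 / n ^ 2 * ∫ ω, T ω ^ 2 ∂μ) := by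
        rw [integral_add (integrable_const _) hiWT, integral_add hiW hiT, integral_const_mul,
          integral_const_mul]
        simp
    _ ≤ (9 * B ^ 3 * |t| ^ 3 + v ^ 2 * t ^ 4 + t ^ 2 / √n)
          + (t ^ 2 / (√n * n) * (D * n) + 4 * t ^ 2 / n ^ 2 * (C * n)) := by
        gcongr
        · exact hD n hn
        · exact hC n hn
    _ = 9 * B ^ 3 * |t| ^ 3 + v ^ 2 * t ^ 4 + (D + 1) * (t ^ 2 / √n) + 4 * C * (t ^ 2 / n) := by
        field_simp; ring
    _ ≤ 9 * B ^ 3 * |t| ^ 3 + v ^ 2 * t ^ 4 + (D + 1) * (t ^ 2 / √n) + 4 * C * (t ^ 2 / √n) := by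
        have : √(n : ℝ) ≤ n := by nlinarith
        gcongr
    _ ≤ (9 * B ^ 3 + (D + 1) + 4 * C + v ^ 2) * (t ^ 2 / √n + |t| ^ 3 + t ^ 4) := by
        have p1 : 0 ≤ t ^ 2 / √n := by positivity
        have p2 : 0 ≤ |t| ^ 3 := by positivity
        have p3 : 0 ≤ t ^ 4 := by positivity
        have q1 : 0 ≤ B ^ 3 := by positivity
        have q2 : 0 ≤ v ^ 2 := by positivity
        have w1 : 9 * B ^ 3 * |t| ^ 3 ≤ 9 * B ^ 3 * (t ^ 2 / √n + |t| ^ 3 + t ^ 4) := by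
          gcongr; linarith
        have w2 : v ^ 2 * t ^ 4 ≤ v ^ 2 * (t ^ 2 / √n + |t| ^ 3 + t ^ 4) := by gcongr; linarith
        have w3 : (D + 1) * (t ^ 2 / √n) ≤ (D + 1) * (t ^ 2 / √n + |t| ^ 3 + t ^ 4) := by
          gcongr; linarith
        have w4 : 4 * C * (t ^ 2 / √n) ≤ 4 * C * (t ^ 2 / √n + |t| ^ 3 + t ^ 4) := by
          gcongr; linarith
        linarith

set_option maxHeartbeats 1000000 in
/-- Central limit theorem for one reinforced walk, in terms of characteristic functions. -/
lemma IsReinforced.tendsto_walkChar (hξ : IsReinforced μ a ξ) (hm : 0 < m) (ha : a < 1 / 2)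
    (ha1 : |a| ≤ 1) (x : Fin m → ℝ) (hx : ∑ i, x i = 0)
    (v : ℝ) (hv : v = (m : ℝ)⁻¹ * ∑ i, x i ^ 2) (s : ℝ) :
    Tendsto (fun n : ℕ => walkChar μ ξ x n (s / √n)) atTop
      (𝓝 ((Real.exp (-(v / (1 - 2 * a) * s ^ 2 / 2)) : ℝ) : ℂ)) := by
  obtain ⟨K, hK0, hK⟩ := hξ.walkChar_step hm ha ha1 x hx v hv
  have hv0 : 0 ≤ v := by rw [hv]; positivity
  have h2a : 0 < 1 - 2 * a := by linarith
  set σ : ℝ := v / (1 - 2 * a) with hσ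
  have hσ0 : 0 ≤ σ := by positivity
  have hvσ : v = (1 - 2 * a) * σ := by rw [hσ]; field_simp
  have ha' := abs_le.1 ha1
  let ψ : ℝ → ℝ := fun s => Real.exp (-(σ * s ^ 2 / 2))
  -- `F n s` is the error at the diffusive scale; one step contracts the frequency by `ρ n`.
  let F : ℕ → ℝ → ℝ := fun n s => ‖walkChar μ ξ x n (s / √n) - (ψ s : ℂ)‖
  let ρ : ℕ → ℝ := fun n => (1 + a / n) * (√n / √((n : ℝ) + 1))
  set κ : ℝ := (1 / 2 - a) / 2 with hκ
  have hκ0 : 0 < κ := by rw [hκ]; linarith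
  have hg2 := sq_le_weight
  have hg3 := abs_pow_three_le_weight
  have hFb (n : ℕ) : ∃ B, 0 ≤ B ∧ ∀ s, F n s ≤ B * (|s| + s ^ 4) := by
    have hM0 : 0 ≤ ∫ ω, |walkSum ξ x n ω| ∂μ := integral_nonneg fun ω => abs_nonneg _
    refine ⟨(√n)⁻¹ * (∫ ω, |walkSum ξ x n ω| ∂μ) + σ, by positivity, fun s => ?_⟩
    have h1 : ‖walkChar μ ξ x n (s / √n) - 1‖
        ≤ (√n)⁻¹ * (∫ ω, |walkSum ξ x n ω| ∂μ) * |s| := by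
      have hi := integrable_comp_walkSum (μ := μ) hξ.meas x n
        (fun y => Complex.exp (Complex.I * (s / √n * y : ℝ)))
      have e1 : walkChar μ ξ x n (s / √n) - 1
          = ∫ ω, (Complex.exp (Complex.I * (s / √n * walkSum ξ x n ω : ℝ)) - 1) ∂μ := by
        rw [integral_sub hi (integrable_const _)]; simp [walkChar]
      rw [e1]
      refine (norm_integral_le_of_norm_le
        ((integrable_comp_walkSum (μ := μ) hξ.meas x n (fun y => |y|)).const_mul (|s| / √n))
        (Eventually.of_forall fun ω => ?_)).trans_eq ?_
      · refine Real.norm_exp_I_mul_ofReal_sub_one_le.trans_eq ?_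
        rw [Real.norm_eq_abs, abs_mul, abs_div, abs_of_nonneg (Real.sqrt_nonneg _)]
      · rw [integral_const_mul]; ring
    have h2 : ‖(1 : ℂ) - (ψ s : ℂ)‖ ≤ σ * s ^ 2 := by
      rw [← Complex.ofReal_one, ← Complex.ofReal_sub, Complex.norm_real, Real.norm_eq_abs]
      have h3 := abs_exp_neg_sub_exp_neg_le le_rfl (by positivity : 0 ≤ σ * s ^ 2 / 2)
      have h4 : 0 ≤ σ * s ^ 2 := by positivity
      rw [neg_zero, Real.exp_zero, zero_sub, abs_neg,
        abs_of_nonneg (by positivity : 0 ≤ σ * s ^ 2 / 2)] at h3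
      simp only [ψ]; linarith
    have h3 : F n s ≤ (√n)⁻¹ * (∫ ω, |walkSum ξ x n ω| ∂μ) * |s| + σ * s ^ 2 :=
      (norm_sub_le_norm_sub_add_norm_sub _ 1 _).trans (add_le_add h1 h2)
    refine h3.trans ?_
    rw [add_mul]
    have h4 : 0 ≤ s ^ 4 := by positivity
    gcongr
    · linarith
    · exact hg2 s
  have he : Tendsto (fun n : ℕ => (3 * K + σ) / √(n : ℝ)) atTop (𝓝 0) :=
    tendsto_const_nhds.div_atTop (Real.tendsto_sqrt_atTop.comp tendsto_natCast_atTop_atTop)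
  have hρ0 : ∀ᶠ n in atTop, 0 ≤ ρ n := eventually_scaling_nonneg ha'.1
  have hρ : ∀ᶠ n : ℕ in atTop, ρ n ≤ 1 - κ / ((n : ℝ) + 1) := eventually_scaling_le ha'.1 ha
  have hrec : ∀ᶠ n : ℕ in atTop, ∀ s,
      F (n + 1) s ≤ F n (ρ n * s) + (3 * K + σ) / √(n : ℝ) / ((n : ℝ) + 1) * (|s| + s ^ 4) := by
    filter_upwards [eventually_ge_atTop 1] with n hn s
    have hn1 : (1 : ℝ) ≤ n := by exact_mod_cast hn
    have hn0 : (0 : ℝ) < n := by linarith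
    have hs0 : 0 < √(n : ℝ) := Real.sqrt_pos.2 hn0
    have hs1 : 0 < √((n : ℝ) + 1) := Real.sqrt_pos.2 (by linarith)
    have q1 := Real.sq_sqrt hn0.le
    have q2 := Real.sq_sqrt (by positivity : (0 : ℝ) ≤ (n : ℝ) + 1)
    have hmono : √(n : ℝ) ≤ √((n : ℝ) + 1) := Real.sqrt_le_sqrt (by linarith)
    have hsn : √(n : ℝ) ≤ n := by nlinarith [Real.one_le_sqrt.2 hn1]
    set g : ℝ := |s| + s ^ 4 with hg
    have hg0 : 0 ≤ g := by positivity
    set t : ℝ := s / √((n : ℝ) + 1) with ht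
    have ht2 : t ^ 2 = s ^ 2 / (n + 1) := by rw [ht, div_pow, q2]
    have htn : (1 + a / n) * t = ρ n * s / √(n : ℝ) := by
      simp only [ρ, ht]; field_simp
    have hρsq : (ρ n) ^ 2 = (1 + a / n) ^ 2 * (n / (n + 1)) := by
      simp only [ρ]; rw [mul_pow, div_pow, q1, q2]
    set E : ℝ := Real.exp (-(v * t ^ 2 / 2)) with hE
    have hE0 : 0 ≤ E := (Real.exp_pos _).le
    have hE1 : E ≤ 1 := Real.exp_le_one_iff.2 (by
      have : 0 ≤ v * t ^ 2 / 2 := by positivity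
      linarith)
    have hstep : ‖walkChar μ ξ x (n + 1) t - walkChar μ ξ x n (ρ n * s / √(n : ℝ)) * (E : ℂ)‖
        ≤ 3 * K / √(n : ℝ) / ((n : ℝ) + 1) * g := by
      have h := hK n hn t
      rw [htn] at h
      refine h.trans ?_
      have b1 : t ^ 2 / √(n : ℝ) ≤ g * (1 / (√(n : ℝ) * (n + 1))) := by
        rw [ht2]
        calc s ^ 2 / (n + 1) / √(n : ℝ) = s ^ 2 * (1 / (√(n : ℝ) * (n + 1))) := by field_simp
          _ ≤ _ := by gcongr; exact hg2 s
      have b2 : |t| ^ 3 ≤ g * (1 / (√(n : ℝ) * (n + 1))) := by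
        have : |t| ^ 3 = |s| ^ 3 * (1 / (√((n : ℝ) + 1) * (n + 1))) := by
          rw [ht, abs_div, abs_of_pos hs1, div_pow, pow_succ' (√((n : ℝ) + 1)), q2]; ring
        rw [this]
        gcongr
        exact hg3 s
      have b3 : t ^ 4 ≤ g * (1 / (√(n : ℝ) * (n + 1))) := by
        have : t ^ 4 = s ^ 4 * (1 / (((n : ℝ) + 1) * (n + 1))) := by
          rw [show t ^ 4 = (t ^ 2) ^ 2 by ring, ht2]; field_simp
        rw [this]
        gcongr
        · rw [hg]; linarith [abs_nonneg s]
        · linarith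
      calc K * (t ^ 2 / √(n : ℝ) + |t| ^ 3 + t ^ 4)
          ≤ K * (g * (1 / (√(n : ℝ) * (n + 1))) + g * (1 / (√(n : ℝ) * (n + 1)))
            + g * (1 / (√(n : ℝ) * (n + 1)))) := by gcongr
        _ = _ := by field_simp; ring
    have hmid : ‖walkChar μ ξ x n (ρ n * s / √(n : ℝ)) * (E : ℂ) - (ψ (ρ n * s) : ℂ) * (E : ℂ)‖
        ≤ F n (ρ n * s) := by
      rw [← sub_mul, norm_mul, Complex.norm_real, Real.norm_eq_abs, abs_of_nonneg hE0]
      exact mul_le_of_le_one_right (norm_nonneg _) hE1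
    -- The choice `σ = v / (1 - 2a)` makes the Gaussian a fixed point up to order `1/n²`.
    have hgauss : ‖(ψ (ρ n * s) : ℂ) * (E : ℂ) - (ψ s : ℂ)‖
        ≤ σ / √(n : ℝ) / ((n : ℝ) + 1) * g := by
      have h1 : ψ (ρ n * s) * E = Real.exp (-(σ * (ρ n * s) ^ 2 / 2 + v * t ^ 2 / 2)) := by
        simp only [ψ, hE, ← Real.exp_add]; congr 1; ring
      rw [← Complex.ofReal_mul, ← Complex.ofReal_sub, Complex.norm_real, Real.norm_eq_abs, h1]
      refine (abs_exp_neg_sub_exp_neg_le (by positivity) (by positivity)).trans ?_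
      have h2 : σ * (ρ n * s) ^ 2 / 2 + v * t ^ 2 / 2 - σ * s ^ 2 / 2
          = σ * s ^ 2 * (a ^ 2 / 2) / n / (n + 1) := by
        rw [mul_pow, hρsq, ht2, hvσ]; field_simp; ring
      rw [h2, abs_of_nonneg (by positivity)]
      have ha2 : a ^ 2 / 2 ≤ 1 := by nlinarith
      calc σ * s ^ 2 * (a ^ 2 / 2) / n / (n + 1) ≤ σ * g * 1 / √(n : ℝ) / (n + 1) := by
            gcongr
            exact hg2 s
        _ = _ := by ring
    have hFn : F (n + 1) s = ‖walkChar μ ξ x (n + 1) t - (ψ s : ℂ)‖ := by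
      simp only [F, ht]; push_cast; rfl
    rw [hFn]
    calc _ ≤ 3 * K / √(n : ℝ) / ((n : ℝ) + 1) * g + F n (ρ n * s)
          + σ / √(n : ℝ) / ((n : ℝ) + 1) * g := by
          refine (norm_sub_le_norm_sub_add_norm_sub _ ((ψ (ρ n * s) : ℂ) * (E : ℂ)) _).trans ?_
          refine add_le_add ?_ hgauss
          exact (norm_sub_le_norm_sub_add_norm_sub _ _ _).trans (add_le_add hstep hmid)
      _ = _ := by ring
  have hlim := tendsto_zero_of_contracting F (fun n s => norm_nonneg _) hFb κ hκ0
    (by rw [hκ]; linarith) ρ _ hρ0 hρ he hrec s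
  exact tendsto_iff_norm_sub_tendsto_zero.2 hlim

end Reinforced

/-! ### The Gaussian limit -/

lemma posSemidef_cov {d m : ℕ} {c : ℝ} (hc : 0 ≤ c) (y : Fin m → Fin d → ℝ) :
    (c • ((m : ℝ)⁻¹ • ∑ i, Matrix.vecMulVec (y i) (y i))).PosSemidef := by
  refine Matrix.PosSemidef.smul (Matrix.PosSemidef.smul ?_ (by positivity)) hc
  exact Matrix.posSemidef_sum _ fun i _ => by
    simpa using Matrix.posSemidef_vecMulVec_self_star (y i)

lemma dotProduct_cov_mulVec {d m : ℕ} (c : ℝ) (y : Fin m → Fin d → ℝ) (l : Fin d → ℝ) :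
    l ⬝ᵥ (c • ((m : ℝ)⁻¹ • ∑ i, Matrix.vecMulVec (y i) (y i))) *ᵥ l
      = c * ((m : ℝ)⁻¹ * ∑ i, (l ⬝ᵥ y i) ^ 2) := by
  simp only [Matrix.smul_mulVec, dotProduct_smul, smul_eq_mul, Matrix.sum_mulVec, dotProduct_sum,
    Matrix.vecMulVec_mulVec]
  congr 2
  refine Finset.sum_congr rfl fun i _ => ?_
  simp [dotProduct_comm l, sq]

/-- Transport of the multivariate Gaussian from Euclidean space to the product space. -/
lemma isCenteredGaussianCov_map {d : ℕ} {S : Matrix (Fin d) (Fin d) ℝ} (hS : S.PosSemidef) :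
    IsCenteredGaussianCov ((multivariateGaussian 0 S).map
      (fun x : EuclideanSpace ℝ (Fin d) => (WithLp.ofLp x : Fin d → ℝ))) S := by
  have hmeas : Measurable (fun x : EuclideanSpace ℝ (Fin d) => (WithLp.ofLp x : Fin d → ℝ)) :=
    WithLp.measurable_ofLp ..
  refine ⟨Measure.isProbabilityMeasure_map hmeas.aemeasurable, fun l => ?_⟩
  have hl : Measurable (fun x : Fin d → ℝ => l ⬝ᵥ x) := by
    unfold dotProduct; fun_prop
  rw [Measure.map_map hl hmeas]
  have hprob : IsProbabilityMeasure ((multivariateGaussian 0 S).map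
      ((fun x : Fin d → ℝ => l ⬝ᵥ x) ∘ fun x : EuclideanSpace ℝ (Fin d) => WithLp.ofLp x)) :=
    Measure.isProbabilityMeasure_map (hl.comp hmeas).aemeasurable
  refine Measure.ext_of_charFun (funext fun s => ?_)
  have h0 : 0 ≤ l ⬝ᵥ S *ᵥ l := by simpa using hS.dotProduct_mulVec_nonneg l
  rw [charFun_gaussianReal, charFun_apply_real, integral_map (hl.comp hmeas).aemeasurable
    (by fun_prop)]
  have h1 := charFun_multivariateGaussian (μ := 0) hS (WithLp.toLp 2 (s • l))
  rw [charFun_apply] at h1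
  convert h1 using 1
  · refine integral_congr_ae (Eventually.of_forall fun x => ?_)
    simp only [Function.comp, EuclideanSpace.inner_eq_star_dotProduct]
    congr 2
    simp [smul_dotProduct]
  · congr 1
    simp [Matrix.mulVec_smul, Real.coe_toNNReal _ h0]
    ring

/-- The drift parameter `a` lies in `[-1, 1/2)` in the diffusive regime. -/
lemma drift_bounds {m : ℕ} (hm : 2 ≤ m) {p a : ℝ} (hp0 : 0 < p)
    (hp : p < ((m : ℝ) + 1) / (2 * m)) (ha : a = ((m : ℝ) * p - 1) / ((m : ℝ) - 1)) :
    a < 1 / 2 ∧ |a| ≤ 1 := by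
  have hm2 : (2 : ℝ) ≤ m := by exact_mod_cast hm
  have hm1 : 0 < (m : ℝ) - 1 := by linarith
  rw [lt_div_iff₀ (by positivity)] at hp
  have h1 : a < 1 / 2 := by rw [ha, div_lt_div_iff₀ hm1 (by norm_num)]; linarith
  refine ⟨h1, abs_le.2 ⟨?_, by linarith⟩⟩
  rw [ha, le_div_iff₀ hm1]
  nlinarith

/-- **CLT in the diffusive regime for the Type-II ERW** (marginal at `t = 1`): if
`0 < p < min (p_c^m) (p_c^{m'})`, then `(S_{2n} - n(ū + w̄))/√n` converges in
distribution to the centered Gaussian on `ℝ^d` with covariance `C_a Σ(U) + C_{a'} Σ(W)`. -/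
theorem typeII_ERW_diffusive_clt
    {Ω : Type*} [MeasurableSpace Ω] (μ : Measure Ω) [IsProbabilityMeasure μ]
    (d m m' : ℕ) (hm : 2 ≤ m) (hm' : 2 ≤ m')
    (u : Fin m → Fin d → ℝ) (hu : Function.Injective u)
    (w : Fin m' → Fin d → ℝ) (hw : Function.Injective w)
    (p : ℝ) (hp0 : 0 < p)
    (hpc : p < min (((m : ℝ) + 1) / (2 * m)) (((m' : ℝ) + 1) / (2 * m')))
    (i0 : Fin m) (j0 : Fin m') (ξ : ℕ → Ω → Fin m) (η : ℕ → Ω → Fin m')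
    (hERW : IsTypeIIERW μ m m' p i0 j0 ξ η)
    (ub wb : Fin d → ℝ) (hub : ub = (m : ℝ)⁻¹ • ∑ i, u i)
    (hwb : wb = (m' : ℝ)⁻¹ • ∑ j, w j)
    (SigmaU SigmaW : Matrix (Fin d) (Fin d) ℝ)
    (hSigmaU : SigmaU = (m : ℝ)⁻¹ • ∑ i, Matrix.vecMulVec (u i - ub) (u i - ub))
    (hSigmaW : SigmaW = (m' : ℝ)⁻¹ • ∑ j, Matrix.vecMulVec (w j - wb) (w j - wb))
    (a a' Ca Ca' : ℝ)
    (ha : a = ((m : ℝ) * p - 1) / ((m : ℝ) - 1))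
    (ha' : a' = ((m' : ℝ) * p - 1) / ((m' : ℝ) - 1))
    (hCa : Ca = 1 / (1 - 2 * a)) (hCa' : Ca' = 1 / (1 - 2 * a')) :
    ∃ ν : Measure (Fin d → ℝ), IsCenteredGaussianCov ν (Ca • SigmaU + Ca' • SigmaW) ∧
      ∀ f : BoundedContinuousFunction (Fin d → ℝ) ℝ,
        Tendsto (fun n : ℕ => ∫ ω, f ((Real.sqrt n)⁻¹ •
            (∑ k ∈ Finset.Icc 1 n, (u (ξ k ω) + w (η k ω)) - (n : ℝ) • (ub + wb))) ∂μ)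
          atTop (𝓝 (∫ x, f x ∂ν)) := by
  have hd := drift_bounds hm hp0 (hpc.trans_le (min_le_left _ _)) ha
  have hd' := drift_bounds hm' hp0 (hpc.trans_le (min_le_right _ _)) ha'
  have hξ : IsReinforced μ a ξ := isReinforced_of_cond hm ha hERW.measurable_fst hERW.cond_fst
  have hη : IsReinforced μ a' η := isReinforced_of_cond hm' ha' hERW.measurable_snd hERW.cond_snd
  have hm0 : (m : ℝ) ≠ 0 := by positivity
  have hm0' : (m' : ℝ) ≠ 0 := by positivity
  have hCa0 : 0 ≤ Ca := by rw [hCa]; exact one_div_nonneg.2 (by linarith [hd.1])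
  have hCa0' : 0 ≤ Ca' := by rw [hCa']; exact one_div_nonneg.2 (by linarith [hd'.1])
  set S := Ca • SigmaU + Ca' • SigmaW with hSdef
  have hS : S.PosSemidef := by
    rw [hSdef, hSigmaU, hSigmaW]
    exact (posSemidef_cov hCa0 _).add (posSemidef_cov hCa0' _)
  refine ⟨_, isCenteredGaussianCov_map hS, fun f => ?_⟩
  let Z : ℕ → Ω → Fin d → ℝ := fun n ω => (Real.sqrt n)⁻¹ •
    (∑ k ∈ Finset.Icc 1 n, (u (ξ k ω) + w (η k ω)) - (n : ℝ) • (ub + wb))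
  have hZ (n : ℕ) : Measurable (Z n) := by
    have hsum : Measurable (fun ω => ∑ k ∈ Finset.Icc 1 n, (u (ξ k ω) + w (η k ω))) :=
      Finset.measurable_fun_sum _ fun k _ =>
        ((Measurable.of_discrete (f := u)).comp (hERW.measurable_fst k)).add
          ((Measurable.of_discrete (f := w)).comp (hERW.measurable_snd k))
    exact (hsum.sub_const ((n : ℝ) • (ub + wb))).const_smul (Real.sqrt n)⁻¹
  have hto : Measurable (fun x : Fin d → ℝ => (WithLp.toLp 2 x : EuclideanSpace ℝ (Fin d))) :=
    WithLp.measurable_toLp ..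
  have hof : Measurable (fun x : EuclideanSpace ℝ (Fin d) => (WithLp.ofLp x : Fin d → ℝ)) :=
    WithLp.measurable_ofLp ..
  have hZE (n : ℕ) : Measurable (fun ω => (WithLp.toLp 2 (Z n ω) : EuclideanSpace ℝ (Fin d))) :=
    hto.comp (hZ n)
  let P : ℕ → ProbabilityMeasure (EuclideanSpace ℝ (Fin d)) := fun n =>
    ⟨μ.map (fun ω => WithLp.toLp 2 (Z n ω)), Measure.isProbabilityMeasure_map (hZE n).aemeasurable⟩
  let P₀ : ProbabilityMeasure (EuclideanSpace ℝ (Fin d)) :=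
    ⟨multivariateGaussian 0 S, inferInstance⟩
  have hP : Tendsto P atTop (𝓝 P₀) := by
    refine ProbabilityMeasure.tendsto_of_tendsto_charFun fun t => ?_
    set l : Fin d → ℝ := WithLp.ofLp t with hl
    let x : Fin m → ℝ := fun i => l ⬝ᵥ (u i - ub)
    let y : Fin m' → ℝ := fun j => l ⬝ᵥ (w j - wb)
    have hx : ∑ i, x i = 0 := by
      simp only [x, ← dotProduct_sum, Finset.sum_sub_distrib, hub]
      simp [← Nat.cast_smul_eq_nsmul ℝ, smul_smul, hm0]
    have hy : ∑ j, y j = 0 := by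
      simp only [y, ← dotProduct_sum, Finset.sum_sub_distrib, hwb]
      simp [← Nat.cast_smul_eq_nsmul ℝ, smul_smul, hm0']
    have hlim := (hξ.tendsto_walkChar (by omega) hd.1 hd.2 x hx _ rfl 1).mul
      (hη.tendsto_walkChar (by omega) hd'.1 hd'.2 y hy _ rfl 1)
    -- The variance in direction `l` is the quadratic form of the covariance matrix at `l`.
    have hvar : l ⬝ᵥ S *ᵥ l = ((m : ℝ)⁻¹ * ∑ i, x i ^ 2) / (1 - 2 * a)
        + ((m' : ℝ)⁻¹ * ∑ j, y j ^ 2) / (1 - 2 * a') := by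
      rw [hSdef, Matrix.add_mulVec, dotProduct_add, hSigmaU, hSigmaW, dotProduct_cov_mulVec,
        dotProduct_cov_mulVec, hCa, hCa']
      ring
    convert hlim using 1
    · funext n
      -- The characteristic function factors by independence of the two index sequences.
      have hdot (ω : Ω) : l ⬝ᵥ Z n ω = 1 / √n * walkSum ξ x n ω + 1 / √n * walkSum η y n ω := by
        have e1 : ∑ k ∈ Finset.Icc 1 n, (u (ξ k ω) + w (η k ω)) - (n : ℝ) • (ub + wb)
            = ∑ k ∈ Finset.Icc 1 n, (u (ξ k ω) - ub) + ∑ k ∈ Finset.Icc 1 n, (w (η k ω) - wb) := by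
          simp only [Finset.sum_sub_distrib, Finset.sum_add_distrib, Finset.sum_const,
            Nat.card_Icc, Nat.add_sub_cancel, Nat.cast_smul_eq_nsmul, smul_add]
          abel
        simp only [Z, e1, dotProduct_smul, dotProduct_add, dotProduct_sum, smul_eq_mul, walkSum,
          x, y]
        ring
      have hfac (q : ℕ) (z : Fin q → ℝ) : Measurable (fun h : ℕ → Fin q =>
          Complex.exp (Complex.I * (1 / √n * ∑ k ∈ Finset.Icc 1 n, z (h k) : ℝ))) := by
        have hsum : Measurable (fun h : ℕ → Fin q => ∑ k ∈ Finset.Icc 1 n, z (h k)) :=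
          Finset.measurable_fun_sum _ fun k _ =>
            (Measurable.of_discrete (f := z)).comp (measurable_pi_apply k)
        fun_prop
      have hind := hERW.indep.integral_fun_comp_mul_comp
        (measurable_pi_lambda _ hERW.measurable_fst).aemeasurable
        (measurable_pi_lambda _ hERW.measurable_snd).aemeasurable
        (hfac m x).aestronglyMeasurable (hfac m' y).aestronglyMeasurable
      simp only [walkChar]
      refine Eq.trans ?_ hind
      change charFun (μ.map (fun ω => WithLp.toLp 2 (Z n ω))) t = _
      rw [charFun_apply, integral_map (hZE n).aemeasurable (by fun_prop)]
      refine integral_congr_ae (Eventually.of_forall fun ω => ?_)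
      simp only [EuclideanSpace.inner_eq_star_dotProduct]
      rw [← Complex.exp_add]
      have hd2 := hdot ω
      simp only [walkSum] at hd2
      congr 1
      rw [star_trivial, ← hl, hd2]
      push_cast
      ring
    · change 𝓝 (charFun (multivariateGaussian 0 S) t) = _
      rw [charFun_multivariateGaussian hS, ← Complex.ofReal_mul, ← Real.exp_add, ← hl, hvar]
      congr 1
      push_cast
      simp
      ring_nf
  have hofc : Continuous (fun x : EuclideanSpace ℝ (Fin d) => (WithLp.ofLp x : Fin d → ℝ)) :=
    PiLp.continuous_ofLp 2 _
  have hweak := ProbabilityMeasure.tendsto_iff_forall_integral_tendsto.1 hP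
    (f.compContinuous ⟨_, hofc⟩)
  rw [integral_map hof.aemeasurable f.continuous.aestronglyMeasurable]
  refine hweak.congr fun n => ?_
  change ∫ x, f (WithLp.ofLp x) ∂(μ.map (fun ω => WithLp.toLp 2 (Z n ω))) = _
  exact integral_map (hZE n).aemeasurable (f.continuous.comp hofc).aestronglyMeasurable
end
end
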